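/- arXiv:1709.05025 — 2 statements merged into one kernel-verified Lean document; each statement's English description precedes it below -/
import Mathlib

section
/- The subgroup ⟨σ, τ, λ₂₀⟩ of GL(3,ℂ) is the internal direct product of the four subgroups S(2,1), ⟨diag(1, 1, i)⟩, ⟨diag(ζ₅, ζ₅, 1)⟩ and ⟨diag(1, 1, ζ₅)⟩; in particular it is isomorphic to SL(2,5) × ℤ/4 × ℤ/5 × ℤ/5 and has order 12000. -/
noncomputable section
open Matrix

def zeta5 : ℂ := Complex.exp (2 * Real.pi * Complex.I / 5)

def sqrt5 : ℂ := zeta5 - zeta5 ^ 2 - zeta5 ^ 3 + zeta5 ^ 4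

def alpha : Matrix (Fin 2) (Fin 2) ℂ := -(Matrix.of ![![zeta5 ^ 3, 0], ![0, zeta5 ^ 2]])
def beta : Matrix (Fin 2) (Fin 2) ℂ := Matrix.of ![![0, 1], ![-1, 0]]
def gamma : Matrix (Fin 2) (Fin 2) ℂ :=
  (zeta5 ^ 2 - zeta5 ^ 3)⁻¹ •
    Matrix.of ![![zeta5 + zeta5⁻¹, 1], ![1, -(zeta5 + zeta5⁻¹)]]

/-- The block-diagonal embedding of a `2 × 2` matrix into `GL(3)`, with last diagonal entry 1. -/
def emb (A : Matrix (Fin 2) (Fin 2) ℂ) : Matrix (Fin 3) (Fin 3) ℂ :=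
  Matrix.of ![![A 0 0, A 0 1, 0], ![A 1 0, A 1 1, 0], ![0, 0, 1]]

def alpha' : Matrix (Fin 3) (Fin 3) ℂ := emb alpha
def beta' : Matrix (Fin 3) (Fin 3) ℂ := emb beta
def gamma' : Matrix (Fin 3) (Fin 3) ℂ := emb gamma

def sigma : Matrix (Fin 3) (Fin 3) ℂ :=
  Matrix.of ![![(zeta5 - zeta5 ^ 4) / sqrt5, (zeta5 ^ 3 - zeta5 ^ 2) / sqrt5, 0],
    ![(zeta5 ^ 3 - zeta5 ^ 2) / sqrt5, -((zeta5 - zeta5 ^ 4) / sqrt5), 0],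
    ![0, 0, 1]]

def tau : Matrix (Fin 3) (Fin 3) ℂ := Matrix.diagonal ![zeta5, 1, 1]

def rho : Matrix (Fin 3) (Fin 3) ℂ := Matrix.diagonal ![zeta5 ^ 3, zeta5 ^ 2, 1]

/-- The subgroup of `GL(3, ℂ)` generated by the invertible matrices in `S`. -/
def gen3 (S : Set (Matrix (Fin 3) (Fin 3) ℂ)) : Subgroup (GL (Fin 3) ℂ) :=
  Subgroup.closure {g : GL (Fin 3) ℂ | (g : Matrix (Fin 3) (Fin 3) ℂ) ∈ S}

/-- `S(2,1) = ⟨α', β', γ'⟩`. -/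
def S21 : Subgroup (GL (Fin 3) ℂ) := gen3 {alpha', beta', gamma'}

abbrev SL25 := Matrix.SpecialLinearGroup (Fin 2) (ZMod 5)

def lambda20 : Matrix (Fin 3) (Fin 3) ℂ :=
  Matrix.diagonal ![1, 1, Complex.exp (2 * Real.pi * Complex.I / 20)]

/-- `⟨σ, τ, λ₂₀⟩`. -/
def Gt20 : Subgroup (GL (Fin 3) ℂ) := gen3 {sigma, tau, lambda20}

/-- The cyclic subgroup generated by `diag(1, 1, i)`. -/
def Ci : Subgroup (GL (Fin 3) ℂ) := gen3 {Matrix.diagonal ![1, 1, Complex.I]}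

/-- The cyclic subgroup generated by `diag(ζ₅, ζ₅, 1)`. -/
def Dz : Subgroup (GL (Fin 3) ℂ) := gen3 {Matrix.diagonal ![zeta5, zeta5, 1]}

/-- The cyclic subgroup generated by `diag(1, 1, ζ₅)`. -/
def Lz : Subgroup (GL (Fin 3) ℂ) := gen3 {Matrix.diagonal ![1, 1, zeta5]}

/-!
The odd part of the Weil representation of `SL(2, 5)` on functions `ZMod 5 → ℂ` is two-dimensional.
Attached to the character `t ↦ ζ₅ ^ t`, it is a faithful representation `icosahedral`, whose values
at three generators of `SL(2, 5)` are `α`, `β` and `γ`. The `2 × 2` block of `σ` is also one of its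
values, and that of `τ` is a power of `ζ₅` times another. Hence every group in the theorem lies in
the image of the homomorphism `productRep`, which sends `(g, u, v, w)` in
`SL(2, 5) × ℤ/4 × ℤ/5 × ℤ/5` to the block-diagonal matrix with blocks `ζ₅ ^ v • icosahedral g` and
`i ^ u * ζ₅ ^ w`. It is injective because `icosahedral` takes no scalar values but `1` and `-1`,
while `-1` is not a power of `ζ₅`, and `4` and `5` are coprime. The images of the four coordinate
subgroups are the four factors, and the whole image is `⟨σ, τ, λ₂₀⟩`, since `λ₂₀ ^ 5`, `λ₂₀ ^ 4`
and `(σ τ) ^ 12` are the generators `diag(1, 1, i)`, `diag(1, 1, ζ₅)` and `diag(ζ₅, ζ₅, 1)`, and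
what is left of `τ` and `σ` is a transvection and a non-triangular element of `SL(2, 5)`, which
together generate it.
-/

section GaussSums

variable {F R : Type*} [Field F] [Fintype F] [DecidableEq F] [Field R]

/-- The quadratic character of a finite field `F` with values in `R`. -/
def quadChar (F R : Type*) [Field F] [Fintype F] [DecidableEq F] [Field R] : MulChar F R :=
  (quadraticChar F).ringHomComp (Int.castRingHom R)

theorem isQuadratic_quadChar : (quadChar F R).IsQuadratic :=
  (quadraticChar_isQuadratic F).comp _

theorem quadChar_mul_self {a : F} (ha : a ≠ 0) : quadChar F R a * quadChar F R a = 1 := by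
  have h := congrArg (Int.cast : ℤ → R) (quadraticChar_sq_one ha)
  rwa [Int.cast_pow, Int.cast_one, sq] at h

theorem quadChar_inv (a : F) : quadChar F R a⁻¹ = quadChar F R a := by
  rw [← MulChar.inv_apply', isQuadratic_quadChar.inv]

theorem sum_sq_eq_sum_quadChar_add_one (hF : ringChar F ≠ 2) (f : F → R) :
    ∑ t, f (t ^ 2) = ∑ y, (quadChar F R y + 1) * f y := by
  have card_sqrts (y : F) : (Finset.univ.filter (fun t : F ↦ t ^ 2 = y)).card =
      quadChar F R y + 1 := by
    have h := quadraticChar_card_sqrts hF y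
    rw [Set.toFinset_ofPred] at h
    rw [← Int.cast_natCast, h, Int.cast_add, Int.cast_one]
    rfl
  rw [← Finset.sum_fiberwise Finset.univ (fun t : F ↦ t ^ 2)]
  refine Finset.sum_congr rfl fun y _ ↦ ?_
  rw [← card_sqrts, ← nsmul_eq_mul]
  exact Finset.sum_eq_card_nsmul fun t ht ↦ by rw [(Finset.mem_filter.mp ht).2]

variable {ψ : AddChar F R}

theorem sum_addChar_mul_sq (hF : ringChar F ≠ 2) (hψ : ψ.IsPrimitive) {a : F} (ha : a ≠ 0) :
    ∑ t, ψ (a * t ^ 2) = quadChar F R a * gaussSum (quadChar F R) ψ := by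
  have gauss_mulShift : gaussSum (quadChar F R) (ψ.mulShift a) =
      quadChar F R a * gaussSum (quadChar F R) ψ := by
    simpa [isQuadratic_quadChar.inv] using
      gaussSum_mulShift_eq (quadChar F R) ψ (Units.mk0 a ha)
  rw [sum_sq_eq_sum_quadChar_add_one hF (fun y ↦ ψ (a * y)), ← gauss_mulShift]
  simp only [add_mul, one_mul, Finset.sum_add_distrib]
  have sum_zero : ∑ y, ψ (a * y) = 0 := by
    simpa [mul_comm, ha] using AddChar.sum_mulShift a hψ
  rw [sum_zero, add_zero]
  rfl

theorem sum_addChar_quadratic (hF : ringChar F ≠ 2) (hψ : ψ.IsPrimitive) {a : F} (ha : a ≠ 0)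
    (b c : F) : ∑ y, ψ (a * y ^ 2 + b * y + c) =
      quadChar F R a * gaussSum (quadChar F R) ψ * ψ (c - b ^ 2 / (4 * a)) := by
  have two_ne : (2 : F) ≠ 0 := Ring.two_ne_zero hF
  have complete_square (t : F) : a * (t - b / (2 * a)) ^ 2 + b * (t - b / (2 * a)) + c =
      a * t ^ 2 + (c - b ^ 2 / (4 * a)) := by
    rw [show (4 : F) = 2 * 2 by norm_num]
    field
  rw [← sum_addChar_mul_sq hF hψ ha, Finset.sum_mul,
    ← (Equiv.subRight (b / (2 * a))).sum_comp]
  exact Finset.sum_congr rfl fun t _ ↦ by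
    rw [Equiv.subRight_apply, complete_square, AddChar.map_add_eq_mul]

variable [CharZero R]

theorem quadChar_ne_one (hF : ringChar F ≠ 2) : quadChar F R ≠ 1 :=
  (MulChar.ringHomComp_ne_one_iff Int.cast_injective).mpr (quadraticChar_ne_one hF)

theorem card_mul_inv_gaussSum_sq (hF : ringChar F ≠ 2) (hψ : ψ.IsPrimitive) :
    Fintype.card F * (gaussSum (quadChar F R) ψ)⁻¹ ^ 2 = quadChar F R (-1) := by
  have hcard : (Fintype.card F : R) ≠ 0 := Nat.cast_ne_zero.mpr Fintype.card_ne_zero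
  have hχ : quadChar F R (-1) ≠ 0 := left_ne_zero_of_mul_eq_one (quadChar_mul_self (by simp))
  rw [inv_pow, gaussSum_sq (quadChar_ne_one hF) isQuadratic_quadChar hψ]
  field_simp
  rw [sq, quadChar_mul_self (by simp)]

theorem gaussSum_quadChar_ne_zero (hF : ringChar F ≠ 2) (hψ : ψ.IsPrimitive) :
    gaussSum (quadChar F R) ψ ≠ 0 :=
  gaussSum_ne_zero_of_nontrivial (Nat.cast_ne_zero.mpr Fintype.card_ne_zero)
    (quadChar_ne_one hF) hψ

end GaussSums

section Generation

open scoped MatrixGroups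

variable {A : Type*} [CommRing A]

/-- The matrix `(1, b; 0, 1)`. -/
def upperUnipotent (b : A) : SL(2, A) := SpecialLinearGroup.transvection zero_ne_one b

/-- The matrix `(1, 0; b, 1)`. -/
def lowerUnipotent (b : A) : SL(2, A) := SpecialLinearGroup.transvection one_ne_zero b

theorem coe_upperUnipotent (b : A) : (upperUnipotent b : Matrix (Fin 2) (Fin 2) A) =
    !![1, b; 0, 1] := by
  ext i j
  fin_cases i <;> fin_cases j <;> simp [upperUnipotent, SpecialLinearGroup.transvection_coe]

theorem coe_lowerUnipotent (b : A) : (lowerUnipotent b : Matrix (Fin 2) (Fin 2) A) =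
    !![1, 0; b, 1] := by
  ext i j
  fin_cases i <;> fin_cases j <;> simp [lowerUnipotent, SpecialLinearGroup.transvection_coe]

/-- The Weyl element `(0, -1; 1, 0)`. -/
def weyl : SL(2, A) := ⟨!![0, -1; 1, 0], by simp⟩

theorem coe_mul_upperUnipotent {g : SL(2, A)} {a b c d : A}
    (hg : (g : Matrix (Fin 2) (Fin 2) A) = !![a, b; c, d]) (t : A) :
    ((g * upperUnipotent t : SL(2, A)) : Matrix (Fin 2) (Fin 2) A) =
      !![a, a * t + b; c, c * t + d] := by
  simp [hg, coe_upperUnipotent]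

theorem coe_mul_weyl {g : SL(2, A)} {a b c d : A}
    (hg : (g : Matrix (Fin 2) (Fin 2) A) = !![a, b; c, d]) :
    ((g * weyl : SL(2, A)) : Matrix (Fin 2) (Fin 2) A) = !![b, -a; d, -c] := by
  rw [Matrix.SpecialLinearGroup.coe_mul, hg]
  simp [weyl]

theorem mul_sub_mul_eq_one {g : SL(2, A)} {a b c d : A}
    (hg : (g : Matrix (Fin 2) (Fin 2) A) = !![a, b; c, d]) : a * d - b * c = 1 := by
  rw [← Matrix.det_fin_two_of, ← hg, g.2]

theorem upperUnipotent_nsmul (n : ℕ) (b : A) :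
    upperUnipotent (n • b) = upperUnipotent b ^ n := by
  induction n with
  | zero =>
    rw [zero_nsmul, pow_zero, upperUnipotent, SpecialLinearGroup.transvection_coeff_zero]
  | succ n ih =>
    rw [pow_succ, ← ih, succ_nsmul, upperUnipotent, SpecialLinearGroup.transvection_add]
    rfl

theorem conj_upperUnipotent_of_apply_zero_zero {g : SL(2, A)} (hg : g 0 0 = 0) (b : A) :
    g * upperUnipotent b * g⁻¹ = lowerUnipotent (-(g 1 0 ^ 2 * b)) := by
  have hdet := mul_sub_mul_eq_one (Matrix.eta_fin_two g.1)
  ext i j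
  fin_cases i <;> fin_cases j <;>
    simp [coe_upperUnipotent, coe_lowerUnipotent, Matrix.SpecialLinearGroup.coe_inv,
      Matrix.adjugate_fin_two, Matrix.mul_apply, Fin.sum_univ_two, hg] <;> grind

theorem eq_top_of_upperUnipotent_mem {F : Type*} [Field F] {K : Subgroup SL(2, F)}
    (hK : ∀ b, upperUnipotent b ∈ K) {g : SL(2, F)} (hg : g ∈ K) (hc : g 1 0 ≠ 0) :
    K = ⊤ := by
  set h := upperUnipotent (-(g 0 0 / g 1 0)) * g
  have h00 : h 0 0 = 0 := by
    simp [h, coe_upperUnipotent, Matrix.mul_apply, Fin.sum_univ_two, hc]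
  have h10 : h 1 0 = g 1 0 := by
    simp [h, coe_upperUnipotent, Matrix.mul_apply, Fin.sum_univ_two]
  have hh : h ∈ K := K.mul_mem (hK _) hg
  have lower_mem (c : F) : lowerUnipotent c ∈ K := by
    have hconj := conj_upperUnipotent_of_apply_zero_zero h00 (-c / h 1 0 ^ 2)
    rw [show -(h 1 0 ^ 2 * (-c / h 1 0 ^ 2)) = c by rw [h10]; field] at hconj
    exact hconj ▸ K.mul_mem (K.mul_mem hh (hK _)) (K.inv_mem hh)
  refine (Subgroup.eq_top_iff' K).mpr
    (SL2.transvection_induction (· ∈ K) (fun i j hij c ↦ ?_) fun _ _ ↦ K.mul_mem)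
  match i, j with
  | 0, 0 | 1, 1 => exact absurd rfl hij
  | 0, 1 => exact hK c
  | 1, 0 => exact lower_mem c

theorem eq_top_of_upperUnipotent_mem_zmod {p : ℕ} [Fact p.Prime] {K : Subgroup SL(2, ZMod p)}
    {a : ZMod p} (ha : a ≠ 0) (hK : upperUnipotent a ∈ K) {g : SL(2, ZMod p)} (hg : g ∈ K)
    (hc : g 1 0 ≠ 0) : K = ⊤ := by
  refine eq_top_of_upperUnipotent_mem (fun b ↦ ?_) hg hc
  have hb : b = (b / a).val • a := by simp [ha]
  rw [hb, upperUnipotent_nsmul]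
  exact K.pow_mem hK _

theorem card_specialLinearGroup_mul_card_units {n : Type*} [DecidableEq n] [Fintype n]
    [Nonempty n] :
    Nat.card (Matrix.SpecialLinearGroup n A) * Nat.card Aˣ = Nat.card (GL n A) := by
  have range_toGL : (Matrix.SpecialLinearGroup.toGL (n := n) (R := A)).range =
      (Matrix.GeneralLinearGroup.det (n := n) (R := A)).ker := by
    ext g
    refine ⟨?_, fun hg ↦ ⟨⟨g.1, congrArg Units.val hg⟩, Units.ext rfl⟩⟩
    rintro ⟨h, rfl⟩
    exact Units.ext h.2
  rw [← Nat.card_congr (QuotientGroup.quotientKerEquivOfSurjective _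
      (Matrix.GeneralLinearGroup.det_surjective (n := n) (R := A))).toEquiv, ← range_toGL,
    Nat.card_congr (MonoidHom.ofInjective
      (Matrix.SpecialLinearGroup.toGL_injective (n := n) (R := A))).toEquiv, mul_comm]
  exact (Subgroup.card_eq_card_quotient_mul_card_subgroup _).symm

end Generation

section WeilRepresentation

open scoped MatrixGroups

variable {F R : Type*} [Field F] [Fintype F] [DecidableEq F] [Field R]

/-- The kernel of the Weil representation of `SL(2, F)` on functions on `F`, with respect to the
additive character `ψ`: the operator of `g` sends `f` to `x ↦ ∑ y, weilKernel ψ g x y * f y`. The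
two cases are the Borel subgroup and the big Bruhat cell. -/
def weilKernel (ψ : AddChar F R) (g : SL(2, F)) : Matrix F F R :=
  of fun x y ↦ if g 1 0 = 0
    then if y = g 0 0 * x then quadChar F R (g 0 0) * ψ (g 0 0 * g 0 1 * x ^ 2) else 0
    else quadChar F R (g 1 0) * (gaussSum (quadChar F R) ψ)⁻¹ *
      ψ ((g 0 0 * x ^ 2 - 2 * x * y + g 1 1 * y ^ 2) / g 1 0)

variable {ψ : AddChar F R} {g : SL(2, F)} {a b c d : F}

theorem weilKernel_of_eq_zero (hg : (g : Matrix (Fin 2) (Fin 2) F) = !![a, b; 0, d]) (x y : F) :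
    weilKernel ψ g x y = if y = a * x then quadChar F R a * ψ (a * b * x ^ 2) else 0 := by
  simp [weilKernel, hg]

theorem weilKernel_of_ne_zero (hg : (g : Matrix (Fin 2) (Fin 2) F) = !![a, b; c, d])
    (hc : c ≠ 0) (x y : F) :
    weilKernel ψ g x y = quadChar F R c * (gaussSum (quadChar F R) ψ)⁻¹ *
      ψ ((a * x ^ 2 - 2 * x * y + d * y ^ 2) / c) := by
  simp [weilKernel, hg, hc]

theorem weilKernel_neg_neg (g : SL(2, F)) (x y : F) :
    weilKernel ψ g (-x) (-y) = weilKernel ψ g x y := by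
  simp only [weilKernel, of_apply, mul_neg, neg_mul, neg_neg, even_two.neg_pow, neg_inj]

theorem weilKernel_upperUnipotent (t : F) :
    weilKernel ψ (upperUnipotent t) = diagonal fun x ↦ ψ (t * x ^ 2) := by
  ext x y
  rw [weilKernel_of_eq_zero (coe_upperUnipotent t)]
  simp [diagonal_apply, eq_comm (a := x)]

theorem weilKernel_one : weilKernel ψ 1 = 1 := by
  ext x y
  rw [weilKernel_of_eq_zero (Matrix.SpecialLinearGroup.coe_one.trans Matrix.one_fin_two)]
  simp [one_apply, eq_comm (a := x)]

theorem weilKernel_weyl (x y : F) :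
    weilKernel ψ weyl x y = (gaussSum (quadChar F R) ψ)⁻¹ * ψ (-2 * x * y) := by
  rw [weilKernel_of_ne_zero rfl one_ne_zero]
  simp

theorem weilKernel_mul_upperUnipotent (g : SL(2, F)) (t : F) :
    weilKernel ψ (g * upperUnipotent t) = weilKernel ψ g * weilKernel ψ (upperUnipotent t) := by
  ext x y
  obtain ⟨a, b, c, d, hg⟩ : ∃ a b c d : F, (g : Matrix (Fin 2) (Fin 2) F) = !![a, b; c, d] :=
    ⟨_, _, _, _, eta_fin_two g.1⟩
  rw [weilKernel_upperUnipotent, mul_diagonal]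
  rcases eq_or_ne c 0 with rfl | hc
  · rw [weilKernel_of_eq_zero (coe_mul_upperUnipotent hg t |>.trans (by rw [zero_mul])),
      weilKernel_of_eq_zero hg, ite_mul, zero_mul]
    split_ifs with hy
    · rw [mul_assoc (quadChar F R a), ← AddChar.map_add_eq_mul, hy]
      ring_nf
    · rfl
  · rw [weilKernel_of_ne_zero (coe_mul_upperUnipotent hg t) hc, weilKernel_of_ne_zero hg hc,
      mul_assoc _ (ψ _) (ψ _), ← AddChar.map_add_eq_mul]
    congr 2
    field

theorem weilKernel_mul_weyl_of_eq_zero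
    (hg : (g : Matrix (Fin 2) (Fin 2) F) = !![a, b; 0, d]) :
    weilKernel ψ (g * weyl) = weilKernel ψ g * weilKernel ψ weyl := by
  have hdet : a * d = 1 := by simpa using mul_sub_mul_eq_one hg
  have hd : d ≠ 0 := right_ne_zero_of_mul_eq_one hdet
  obtain rfl : a = d⁻¹ := eq_inv_of_mul_eq_one_left hdet
  ext x y
  rw [weilKernel_of_ne_zero (coe_mul_weyl hg) hd, Matrix.mul_apply]
  simp only [weilKernel_of_eq_zero hg, weilKernel_weyl, ite_mul, zero_mul, Finset.sum_ite_eq',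
    Finset.mem_univ, if_true, quadChar_inv]
  rw [mul_mul_mul_comm, ← AddChar.map_add_eq_mul]
  congr 2
  field

variable [CharZero R]

theorem weilKernel_mul_weyl_of_ne_zero_of_eq_zero (hF : ringChar F ≠ 2) (hψ : ψ.IsPrimitive)
    (hg : (g : Matrix (Fin 2) (Fin 2) F) = !![a, b; c, 0]) (hc : c ≠ 0) :
    weilKernel ψ (g * weyl) = weilKernel ψ g * weilKernel ψ weyl := by
  have two_ne : (2 : F) ≠ 0 := Ring.two_ne_zero hF
  obtain rfl : b = (-c)⁻¹ := by
    have hdet := mul_sub_mul_eq_one hg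
    grind
  ext x y
  have orthogonality : ∑ z, ψ (z * (-(2 * (x / c + y)))) =
      if y = (-c)⁻¹ * x then (Fintype.card F : R) else 0 := by
    have h : -(2 * (x / c + y)) = 0 ↔ y = (-c)⁻¹ * x := by grind
    simp only [AddChar.sum_mulShift _ hψ, h, Nat.cast_ite, Nat.cast_zero]
  set χ := quadChar F R
  set G := gaussSum χ ψ
  have sign : χ (-c)⁻¹ = χ c * (Fintype.card F * G⁻¹ ^ 2) := by
    rw [card_mul_inv_gaussSum_sq hF hψ, ← map_mul, mul_neg_one, quadChar_inv]
  calc weilKernel ψ (g * weyl) x y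
      = if y = (-c)⁻¹ * x then χ (-c)⁻¹ * ψ ((-c)⁻¹ * -a * x ^ 2) else 0 :=
        weilKernel_of_eq_zero (coe_mul_weyl hg) x y
    _ = χ c * G⁻¹ ^ 2 * ψ (a * x ^ 2 / c) * ∑ z, ψ (z * (-(2 * (x / c + y)))) := by
        rw [orthogonality, mul_ite, mul_zero]
        refine if_congr Iff.rfl ?_ rfl
        rw [sign, show (-c)⁻¹ * -a * x ^ 2 = a * x ^ 2 / c by field]
        ring
    _ = (weilKernel ψ g * weilKernel ψ weyl) x y := by
        rw [Matrix.mul_apply, Finset.mul_sum]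
        refine Finset.sum_congr rfl fun z _ ↦ ?_
        rw [weilKernel_of_ne_zero hg hc, weilKernel_weyl, mul_mul_mul_comm,
          ← AddChar.map_add_eq_mul, mul_assoc _ (ψ _) (ψ _), ← AddChar.map_add_eq_mul, sq,
          ← mul_assoc (χ c)]
        congr 2
        field

theorem weilKernel_mul_weyl_of_ne_zero_of_ne_zero (hF : ringChar F ≠ 2) (hψ : ψ.IsPrimitive)
    (hg : (g : Matrix (Fin 2) (Fin 2) F) = !![a, b; c, d]) (hc : c ≠ 0) (hd : d ≠ 0) :
    weilKernel ψ (g * weyl) = weilKernel ψ g * weilKernel ψ weyl := by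
  have two_ne : (2 : F) ≠ 0 := Ring.two_ne_zero hF
  have hdet := mul_sub_mul_eq_one hg
  have hG := gaussSum_quadChar_ne_zero hF hψ
  have χ_div : quadChar F R c * quadChar F R (d / c) = quadChar F R d := by
    rw [← map_mul, mul_div_cancel₀ d hc]
  ext x y
  set χ := quadChar F R
  set G := gaussSum χ ψ
  calc weilKernel ψ (g * weyl) x y
      = χ d * G⁻¹ * ψ ((b * x ^ 2 - 2 * x * y + -c * y ^ 2) / d) :=
        weilKernel_of_ne_zero (coe_mul_weyl hg) hd x y
    _ = χ c * G⁻¹ ^ 2 * ∑ z, ψ (d / c * z ^ 2 + -(2 * (x / c + y)) * z + a * x ^ 2 / c) := by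
        have exponent : a * x ^ 2 / c - (-(2 * (x / c + y))) ^ 2 / (4 * (d / c)) =
            (b * x ^ 2 - 2 * x * y + -c * y ^ 2) / d := by
          rw [show (4 : F) = 2 * 2 by norm_num]
          field_simp
          grind
        rw [sum_addChar_quadratic hF hψ (div_ne_zero hd hc), exponent, ← χ_div]
        field
    _ = (weilKernel ψ g * weilKernel ψ weyl) x y := by
        rw [Matrix.mul_apply, Finset.mul_sum]
        refine Finset.sum_congr rfl fun z _ ↦ ?_
        rw [weilKernel_of_ne_zero hg hc, weilKernel_weyl, mul_mul_mul_comm,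
          ← AddChar.map_add_eq_mul, sq, ← mul_assoc (χ c)]
        congr 2
        field

theorem weilKernel_mul_weyl (hF : ringChar F ≠ 2) (hψ : ψ.IsPrimitive) (g : SL(2, F)) :
    weilKernel ψ (g * weyl) = weilKernel ψ g * weilKernel ψ weyl := by
  have hg := eta_fin_two g.1
  by_cases hc : g 1 0 = 0
  · exact weilKernel_mul_weyl_of_eq_zero (hg.trans (by rw [hc]))
  · by_cases hd : g 1 1 = 0
    · exact weilKernel_mul_weyl_of_ne_zero_of_eq_zero hF hψ (hg.trans (by rw [hd])) hc
    · exact weilKernel_mul_weyl_of_ne_zero_of_ne_zero hF hψ hg hc hd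

theorem weilKernel_mul (hF : ringChar F ≠ 2) (hψ : ψ.IsPrimitive) (g h : SL(2, F)) :
    weilKernel ψ (g * h) = weilKernel ψ g * weilKernel ψ h := by
  let K : Subgroup SL(2, F) :=
    { carrier := {h | ∀ g, weilKernel ψ (g * h) = weilKernel ψ g * weilKernel ψ h}
      one_mem' := fun g ↦ by rw [mul_one, weilKernel_one, mul_one]
      mul_mem' := fun {h k} hh hk g ↦ by rw [← mul_assoc, hk, hh, hk h, mul_assoc]
      inv_mem' := fun {h} hh g ↦ by
        have inv_mul : weilKernel ψ h⁻¹ * weilKernel ψ h = 1 := by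
          rw [← hh, inv_mul_cancel, weilKernel_one]
        rw [← inv_mul_cancel_right g h, hh, inv_mul_cancel_right, mul_assoc,
          mul_eq_one_comm.mp inv_mul, mul_one] }
  have hK : K = ⊤ := eq_top_of_upperUnipotent_mem
    (fun t g ↦ weilKernel_mul_upperUnipotent g t) (weilKernel_mul_weyl hF hψ) (by simp [weyl])
  exact (hK ▸ Subgroup.mem_top h : h ∈ K) g

end WeilRepresentation

section OddPart

variable {ι F R : Type*} [AddCommGroup F] [CommRing R]

/-- A half-system of the abelian group `F`: every element of `F` is exactly one of `0`, `s i`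
and `-s i`. It indexes a basis of the odd functions on `F`. -/
def IsHalfSystem (s : ι → F) : Prop :=
  Function.Bijective fun o : Option (ι ⊕ ι) ↦ o.elim 0 (Sum.elim s (-s))

/-- The matrix of the operator with kernel `L` on odd functions, in the basis
`δ_(s i) - δ_(-s i)`. -/
def oddPart (s : ι → F) (L : Matrix F F R) : Matrix ι ι R :=
  of fun i j ↦ L (s i) (s j) - L (s i) (-s j)

variable {s : ι → F}

theorem IsHalfSystem.apply_injective (hs : IsHalfSystem s) : Function.Injective s := fun i j h ↦ by
  simpa using Function.Bijective.injective hs (a₁ := some (.inl i)) (a₂ := some (.inl j)) h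

theorem IsHalfSystem.ne_neg (hs : IsHalfSystem s) (i j : ι) : s i ≠ -s j := fun h ↦ by
  simpa using Function.Bijective.injective hs (a₁ := some (.inl i)) (a₂ := some (.inr j)) h

theorem IsHalfSystem.ne_zero (hs : IsHalfSystem s) (i : ι) : s i ≠ 0 := fun h ↦ by
  simpa using Function.Bijective.injective hs (a₁ := some (.inl i)) (a₂ := none) h

theorem oddPart_one [DecidableEq ι] [DecidableEq F] (hs : IsHalfSystem s) :
    oddPart s (1 : Matrix F F R) = 1 := by
  ext i j
  simp [oddPart, one_apply, hs.apply_injective.eq_iff, hs.ne_neg]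

variable [Fintype ι] [Fintype F]

theorem IsHalfSystem.sum_eq (hs : IsHalfSystem s) (f : F → R) :
    ∑ x, f x = f 0 + ∑ i, (f (s i) + f (-s i)) := by
  rw [← hs.sum_comp, Fintype.sum_option, Fintype.sum_sum_type, Finset.sum_add_distrib]
  rfl

theorem oddPart_mul (hs : IsHalfSystem s) (L : Matrix F F R) {M : Matrix F F R}
    (hM : ∀ x y, M (-x) (-y) = M x y) :
    oddPart s (L * M) = oddPart s L * oddPart s M := by
  ext i j
  have odd (x : F) : M (-x) (s j) - M (-x) (-s j) = -(M x (s j) - M x (-s j)) := by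
    rw [← hM x (s j), ← hM x (-s j), neg_neg, neg_sub]
  have zero : M 0 (s j) - M 0 (-s j) = 0 := by
    rw [← hM 0 (s j), neg_zero, sub_self]
  calc oddPart s (L * M) i j
      = ∑ x, L (s i) x * (M x (s j) - M x (-s j)) := by
        simp only [oddPart, of_apply, Matrix.mul_apply, mul_sub, Finset.sum_sub_distrib]
    _ = ∑ k, (L (s i) (s k) - L (s i) (-s k)) * (M (s k) (s j) - M (s k) (-s j)) := by
        rw [hs.sum_eq, zero, mul_zero, zero_add]
        exact Finset.sum_congr rfl fun k _ ↦ by rw [odd]; ring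
    _ = (oddPart s L * oddPart s M) i j := rfl

end OddPart

section OddWeil

open scoped MatrixGroups

variable {ι F R : Type*} [Fintype ι] [DecidableEq ι] [Field F] [Fintype F] [DecidableEq F]
  [Field R] [CharZero R] {ψ : AddChar F R} {s : ι → F}

/-- The odd part of the Weil representation of `SL(2, F)`, of degree `(q - 1) / 2`. -/
def oddWeil (hF : ringChar F ≠ 2) (hψ : ψ.IsPrimitive) (hs : IsHalfSystem s) :
    SL(2, F) →* Matrix ι ι R where
  toFun g := oddPart s (weilKernel ψ g)
  map_one' := by rw [weilKernel_one, oddPart_one hs]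
  map_mul' g h := by
    rw [weilKernel_mul hF hψ, oddPart_mul hs _ (weilKernel_neg_neg h)]

variable {hF : ringChar F ≠ 2} {hψ : ψ.IsPrimitive} {hs : IsHalfSystem s} {g : SL(2, F)}
  {a b c d : F}

theorem oddWeil_apply_of_eq_zero (hg : (g : Matrix (Fin 2) (Fin 2) F) = !![a, b; 0, d])
    (i j : ι) : oddWeil hF hψ hs g i j = quadChar F R a * ψ (a * b * s i ^ 2) *
      ((if s j = a * s i then 1 else 0) - if -s j = a * s i then 1 else 0) := by
  simp [oddWeil, oddPart, weilKernel_of_eq_zero hg, mul_sub]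

theorem oddWeil_apply_of_ne_zero (hg : (g : Matrix (Fin 2) (Fin 2) F) = !![a, b; c, d])
    (hc : c ≠ 0) (i j : ι) :
    oddWeil hF hψ hs g i j = quadChar F R c * (gaussSum (quadChar F R) ψ)⁻¹ *
      (ψ ((a * s i ^ 2 - 2 * s i * s j + d * s j ^ 2) / c) -
        ψ ((a * s i ^ 2 + 2 * s i * s j + d * s j ^ 2) / c)) := by
  simp [oddWeil, oddPart, weilKernel_of_ne_zero hg hc, mul_sub]

theorem oddWeil_apply_ne_zero (hψinj : Function.Injective ψ)
    (hg : (g : Matrix (Fin 2) (Fin 2) F) = !![a, b; c, d]) (hc : c ≠ 0) (i j : ι) :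
    oddWeil hF hψ hs g i j ≠ 0 := by
  have hχ : quadChar F R c ≠ 0 := left_ne_zero_of_mul_eq_one (quadChar_mul_self hc)
  rw [oddWeil_apply_of_ne_zero hg hc]
  refine mul_ne_zero (mul_ne_zero hχ (inv_ne_zero (gaussSum_quadChar_ne_zero hF hψ)))
    (sub_ne_zero_of_ne (hψinj.ne fun h ↦ ?_))
  have two_ne : (2 : F) ≠ 0 := Ring.two_ne_zero hF
  have hi := hs.ne_zero i
  have hj := hs.ne_zero j
  have : 2 * 2 * s i * s j = 0 := by
    grind
  simp_all

end OddWeil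

section BinaryIcosahedral

theorem fact_prime_five : Fact (Nat.Prime 5) := ⟨Nat.prime_five⟩

attribute [local instance] fact_prime_five

theorem card_SL25 : Nat.card SL25 = 120 := by
  have h := card_specialLinearGroup_mul_card_units (A := ZMod 5) (n := Fin 2)
  rw [Matrix.card_GL_field, Fin.prod_univ_two, Nat.card_eq_fintype_card (α := (ZMod 5)ˣ),
    ZMod.card_units, ZMod.card] at h
  lia

theorem zmodChar_injective {n : ℕ} [NeZero n] {R : Type*} [CommMonoid R] {ζ : R}
    (hζ : IsPrimitiveRoot ζ n) : Function.Injective (AddChar.zmodChar n hζ.pow_eq_one) := by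
  intro s t h
  rw [AddChar.zmodChar_apply, AddChar.zmodChar_apply] at h
  exact ZMod.val_injective n (hζ.pow_inj s.val_lt t.val_lt h)

theorem isPrimitiveRoot_zeta5 : IsPrimitiveRoot zeta5 5 :=
  Complex.isPrimitiveRoot_exp 5 (by simp)

/-- The additive character `t ↦ ζ₅ ^ t` of `ZMod 5`. -/
def psi5 : AddChar (ZMod 5) ℂ := AddChar.zmodChar 5 isPrimitiveRoot_zeta5.pow_eq_one

theorem psi5_apply (t : ZMod 5) : psi5 t = zeta5 ^ t.val := AddChar.zmodChar_apply _ t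

theorem psi5_isPrimitive : psi5.IsPrimitive :=
  AddChar.zmodChar_primitive_of_primitive_root 5 isPrimitiveRoot_zeta5

theorem psi5_injective : Function.Injective psi5 := zmodChar_injective isPrimitiveRoot_zeta5

theorem ringChar_zmod_five_ne_two : ringChar (ZMod 5) ≠ 2 := by
  simp [ZMod.ringChar_zmod_n]

theorem quadChar_zmod_five_two : quadChar (ZMod 5) ℂ 2 = -1 := by
  have h : quadraticChar (ZMod 5) 2 = -1 := by decide
  simp [quadChar, h]

theorem quadChar_zmod_five_neg_one : quadChar (ZMod 5) ℂ (-1) = 1 := by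
  have h : quadraticChar (ZMod 5) (-1) = 1 := by decide
  simp [quadChar, h]

theorem one_add_zeta5_add : 1 + zeta5 + zeta5 ^ 2 + zeta5 ^ 3 + zeta5 ^ 4 = 0 := by
  simpa [Finset.sum_range_succ] using isPrimitiveRoot_zeta5.geom_sum_eq_zero (by simp)

theorem gaussSum_psi5 : gaussSum (quadChar (ZMod 5) ℂ) psi5 = sqrt5 := by
  have h := sum_addChar_mul_sq ringChar_zmod_five_ne_two psi5_isPrimitive one_ne_zero
  rw [map_one, one_mul] at h
  rw [← h]
  simp only [psi5_apply]
  change ∑ t : Fin 5, zeta5 ^ (ZMod.val (n := 5) (1 * t ^ 2)) = _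
  rw [Fin.sum_univ_five]
  change zeta5 ^ 0 + zeta5 ^ 1 + zeta5 ^ 4 + zeta5 ^ 4 + zeta5 ^ 1 = _
  rw [sqrt5]
  linear_combination one_add_zeta5_add

theorem isHalfSystem_one_three : IsHalfSystem ![(1 : ZMod 5), 3] := by
  unfold IsHalfSystem
  decide

theorem sqrt5_ne_zero : sqrt5 ≠ 0 :=
  gaussSum_psi5 ▸ gaussSum_quadChar_ne_zero ringChar_zmod_five_ne_two psi5_isPrimitive

/-- The odd Weil representation at `p = 5`, with image the binary icosahedral group. -/
def icosahedral : SL25 →* Matrix (Fin 2) (Fin 2) ℂ :=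
  oddWeil ringChar_zmod_five_ne_two psi5_isPrimitive isHalfSystem_one_three

theorem icosahedral_of_eq_zero {g : SL25} {a b d : ZMod 5}
    (hg : (g : Matrix (Fin 2) (Fin 2) (ZMod 5)) = !![a, b; 0, d]) :
    icosahedral g = of fun i j ↦ quadChar (ZMod 5) ℂ a *
      zeta5 ^ (a * b * ![1, 3] i ^ 2).val *
      (((if ![1, 3] j = a * ![1, 3] i then 1 else 0) -
        if -![1, 3] j = a * ![1, 3] i then 1 else 0 : ℤ) : ℂ) := by
  ext i j
  refine (oddWeil_apply_of_eq_zero hg i j).trans ?_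
  rw [psi5_apply, of_apply, Int.cast_sub, Int.cast_ite, Int.cast_ite, Int.cast_zero, Int.cast_one]

theorem icosahedral_of_ne_zero {g : SL25} {a b c d c' : ZMod 5}
    (hg : (g : Matrix (Fin 2) (Fin 2) (ZMod 5)) = !![a, b; c, d]) (hc : c * c' = 1) :
    icosahedral g = of fun i j ↦ quadChar (ZMod 5) ℂ c * sqrt5⁻¹ *
      (zeta5 ^ ((a * ![1, 3] i ^ 2 - 2 * ![1, 3] i * ![1, 3] j + d * ![1, 3] j ^ 2) *
          c').val -
        zeta5 ^ ((a * ![1, 3] i ^ 2 + 2 * ![1, 3] i * ![1, 3] j + d * ![1, 3] j ^ 2) *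
          c').val) := by
  ext i j
  refine (oddWeil_apply_of_ne_zero hg (left_ne_zero_of_mul_eq_one hc) i j).trans ?_
  rw [eq_inv_of_mul_eq_one_right hc, ← div_eq_mul_inv, ← div_eq_mul_inv, gaussSum_psi5,
    psi5_apply, psi5_apply]
  rfl

/-- The element `(-1, 2; 0, -1)` of `SL(2, 5)`, which `icosahedral` sends to `alpha`. -/
def sl2Alpha : SL25 := ⟨!![-1, 2; 0, -1], by decide⟩

/-- The element `(2, 0; 0, 3)` of `SL(2, 5)`, which `icosahedral` sends to `beta`. -/
def sl2Beta : SL25 := ⟨!![2, 0; 0, 3], by decide⟩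

/-- The element `(0, 2; 2, 0)` of `SL(2, 5)`, which `icosahedral` sends to the upper left block
of `sigma`. -/
def sl2Sigma : SL25 := ⟨!![0, 2; 2, 0], by decide⟩

theorem icosahedral_sl2Alpha : icosahedral sl2Alpha = alpha := by
  have h : icosahedral sl2Alpha = of fun i j ↦ 1 * zeta5 ^ (![3, 2] i) *
      ((!![-1, 0; 0, -1] : Matrix (Fin 2) (Fin 2) ℤ) i j : ℂ) := by
    rw [icosahedral_of_eq_zero rfl, quadChar_zmod_five_neg_one]
    ext i j
    fin_cases i <;> fin_cases j <;> rfl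
  rw [h]
  ext i j
  fin_cases i <;> fin_cases j <;> simp [alpha]

theorem icosahedral_sl2Beta : icosahedral sl2Beta = beta := by
  have h : icosahedral sl2Beta = of fun i j ↦ -1 * zeta5 ^ 0 *
      ((!![0, -1; 1, 0] : Matrix (Fin 2) (Fin 2) ℤ) i j : ℂ) := by
    rw [icosahedral_of_eq_zero rfl, quadChar_zmod_five_two]
    ext i j
    fin_cases i <;> fin_cases j <;> rfl
  rw [h]
  ext i j
  fin_cases i <;> fin_cases j <;> simp [beta]

theorem zeta5_pow_three_smul_icosahedral_upperUnipotent :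
    zeta5 ^ 3 • icosahedral (upperUnipotent 3) = !![zeta5, 0; 0, 1] := by
  have h : icosahedral (upperUnipotent 3) = of fun i j ↦ 1 * zeta5 ^ (![3, 2] i) *
      ((!![1, 0; 0, 1] : Matrix (Fin 2) (Fin 2) ℤ) i j : ℂ) := by
    rw [icosahedral_of_eq_zero (coe_upperUnipotent 3), map_one]
    ext i j
    fin_cases i <;> fin_cases j <;> rfl
  have zeta5_pow_five := isPrimitiveRoot_zeta5.pow_eq_one
  rw [h]
  ext i j
  fin_cases i <;> fin_cases j <;> simp
  · linear_combination zeta5 * zeta5_pow_five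
  · linear_combination zeta5_pow_five

theorem icosahedral_weyl_eq_inv_sqrt5_smul : icosahedral weyl =
    sqrt5⁻¹ • !![zeta5 ^ 3 - zeta5 ^ 2, zeta5 ^ 4 - zeta5 ^ 1;
      zeta5 ^ 4 - zeta5 ^ 1, zeta5 ^ 2 - zeta5 ^ 3] := by
  rw [icosahedral_of_ne_zero rfl (one_mul 1), map_one, one_mul]
  ext i j
  fin_cases i <;> fin_cases j <;> rfl

theorem icosahedral_weyl : icosahedral weyl = gamma := by
  have zeta5_pow_five := isPrimitiveRoot_zeta5.pow_eq_one
  have inv_zeta5 : zeta5⁻¹ = zeta5 ^ 4 :=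
    inv_eq_of_mul_eq_one_right (by rw [← zeta5_pow_five]; ring)
  have inv_sub : (zeta5 ^ 2 - zeta5 ^ 3)⁻¹ = sqrt5⁻¹ * (zeta5 ^ 4 - zeta5) := by
    refine inv_eq_of_mul_eq_one_right ?_
    rw [mul_left_comm, inv_mul_eq_one₀ sqrt5_ne_zero, sqrt5]
    linear_combination (zeta5 ^ 2 - zeta5) * zeta5_pow_five
  rw [icosahedral_weyl_eq_inv_sqrt5_smul, gamma, inv_sub, inv_zeta5, mul_smul]
  congr 1
  ext i j
  fin_cases i <;> fin_cases j <;> simp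
  · linear_combination -zeta5 ^ 3 * zeta5_pow_five
  · linear_combination zeta5 ^ 3 * zeta5_pow_five

theorem icosahedral_sl2Sigma : icosahedral sl2Sigma = sqrt5⁻¹ •
    !![zeta5 ^ 1 - zeta5 ^ 4, zeta5 ^ 3 - zeta5 ^ 2;
      zeta5 ^ 3 - zeta5 ^ 2, zeta5 ^ 4 - zeta5 ^ 1] := by
  have h : icosahedral sl2Sigma = -sqrt5⁻¹ •
      !![zeta5 ^ 4 - zeta5 ^ 1, zeta5 ^ 2 - zeta5 ^ 3;
        zeta5 ^ 2 - zeta5 ^ 3, zeta5 ^ 1 - zeta5 ^ 4] := by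
    rw [icosahedral_of_ne_zero rfl (by decide : (2 * 3 : ZMod 5) = 1), quadChar_zmod_five_two,
      neg_one_mul]
    ext i j
    fin_cases i <;> fin_cases j <;> rfl
  rw [h, neg_smul, ← smul_neg]
  simp

theorem apply_one_zero_eq_zero_of_psi5_smul_icosahedral_eq_one {t : ZMod 5} {g : SL25}
    (h : psi5 t • icosahedral g = 1) : g 1 0 = 0 := by
  by_contra hc
  have hψ : psi5 t ≠ 0 := by
    rw [psi5_apply]
    exact pow_ne_zero _ (isPrimitiveRoot_zeta5.ne_zero (by simp))
  exact mul_ne_zero hψ (oddWeil_apply_ne_zero psi5_injective (eta_fin_two g.1) hc 0 1)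
    (congrFun₂ h 0 1)

theorem psi5_ne_neg_one (t : ZMod 5) : psi5 t ≠ -1 := fun h ↦ by
  have pow_five : psi5 t ^ 5 = 1 := by
    rw [psi5_apply, pow_right_comm, isPrimitiveRoot_zeta5.pow_eq_one, one_pow]
  norm_num [h] at pow_five

theorem eq_one_of_psi5_smul_icosahedral_eq_one {t : ZMod 5} {g : SL25}
    (h : psi5 t • icosahedral g = 1) : t = 0 ∧ g = 1 := by
  have hg := eta_fin_two g.1
  rw [apply_one_zero_eq_zero_of_psi5_smul_icosahedral_eq_one h] at hg
  have hdet := mul_sub_mul_eq_one hg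
  set a := g.1 0 0
  set b := g.1 0 1
  set d := g.1 1 1
  have entry (i) : psi5 t * icosahedral g i i = 1 := (congrFun₂ h i i).trans (one_apply_eq i)
  simp only [icosahedral, oddWeil_apply_of_eq_zero hg] at entry
  obtain ha | ha : a = 1 ∨ a = -1 := by
    by_contra! ha
    simpa [ha.1.symm, ha.2.symm] using entry 0
  · rw [ha] at hg hdet entry
    have exponent_zero : t + b = 0 := psi5_injective <| by
      simpa [AddChar.map_add_eq_mul, show (-1 : ZMod 5) ≠ 1 by decide] using entry 0
    have exponent_one : t + b * 3 ^ 2 = 0 := psi5_injective <| by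
      simpa [AddChar.map_add_eq_mul, show (-3 : ZMod 5) ≠ 3 by decide] using entry 1
    have hb : b = 0 := by
      have : ∀ t b : ZMod 5, t + b = 0 → t + b * 3 ^ 2 = 0 → b = 0 := by decide
      exact this t b exponent_zero exponent_one
    refine ⟨by simpa [hb] using exponent_zero, Subtype.ext ?_⟩
    rw [hg, hb, show d = 1 by simpa using hdet, ← one_fin_two, Matrix.SpecialLinearGroup.coe_one]
  · rw [ha] at entry
    refine absurd ?_ (psi5_ne_neg_one (t + -b))
    simpa [AddChar.map_add_eq_mul, quadChar_zmod_five_neg_one, neg_eq_iff_eq_neg,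
      show (1 : ZMod 5) ≠ -1 by decide] using entry 0

end BinaryIcosahedral

section SubgroupProd

variable {G N : Type*} [Group G] [Group N]

theorem map_inl_eq_prod_bot (H : Subgroup G) : H.map (MonoidHom.inl G N) = H.prod ⊥ :=
  Subgroup.toSubmonoid_injective (Submonoid.map_inl H.toSubmonoid)

theorem map_inr_eq_bot_prod (K : Subgroup N) : K.map (MonoidHom.inr G N) = Subgroup.prod ⊥ K :=
  Subgroup.toSubmonoid_injective (Submonoid.map_inr K.toSubmonoid)

theorem prod_inf_prod (H H' : Subgroup G) (K K' : Subgroup N) :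
    H.prod K ⊓ H'.prod K' = (H ⊓ H').prod (K ⊓ K') :=
  SetLike.ext fun _ ↦ and_and_and_comm

theorem prod_sup_prod (H H' : Subgroup G) (K K' : Subgroup N) :
    H.prod K ⊔ H'.prod K' = (H ⊔ H').prod (K ⊔ K') := by
  refine le_antisymm (sup_le (Subgroup.prod_mono le_sup_left le_sup_left)
    (Subgroup.prod_mono le_sup_right le_sup_right)) (Subgroup.prod_le_iff.mpr ?_)
  simp only [Subgroup.map_sup, map_inl_eq_prod_bot, map_inr_eq_bot_prod]
  exact ⟨sup_le_sup (Subgroup.prod_mono le_rfl bot_le) (Subgroup.prod_mono le_rfl bot_le),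
    sup_le_sup (Subgroup.prod_mono bot_le le_rfl) (Subgroup.prod_mono bot_le le_rfl)⟩

theorem eq_top_of_comap_inl_of_comap_inr {K : Subgroup (G × N)}
    (hG : K.comap (MonoidHom.inl G N) = ⊤) (hN : K.comap (MonoidHom.inr G N) = ⊤) : K = ⊤ := by
  rw [← top_le_iff, ← Subgroup.top_prod_top, Subgroup.prod_le_iff, Subgroup.map_le_iff_le_comap,
    Subgroup.map_le_iff_le_comap, hG, hN]
  exact ⟨le_rfl, le_rfl⟩

theorem mul_comm_of_mem_map_of_disjoint {H K : Subgroup G} [hH : H.Normal] [hK : K.Normal]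
    (hHK : Disjoint H K) (f : G →* N) : ∀ a ∈ H.map f, ∀ b ∈ K.map f, a * b = b * a := by
  rintro _ ⟨x, hx, rfl⟩ _ ⟨y, hy, rfl⟩
  exact (Subgroup.commute_of_normal_of_disjoint H K hH hK hHK x y hx hy).map f

theorem eq_top_of_ofAdd_one_mem {n : ℕ} {K : Subgroup (Multiplicative (ZMod n))}
    (h : Multiplicative.ofAdd 1 ∈ K) : K = ⊤ := by
  refine (Subgroup.eq_top_iff' K).mpr fun x ↦ ?_
  obtain ⟨k, hk⟩ := ZMod.intCast_surjective x.toAdd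
  have : x = Multiplicative.ofAdd 1 ^ k := by
    rw [← ofAdd_zsmul, zsmul_one, hk, ofAdd_toAdd]
  exact this ▸ K.zpow_mem h k

end SubgroupProd

section ProductRepresentation

attribute [local instance] fact_prime_five

/-- The block-diagonal matrix with blocks `A` and `z`, as a function of the pair `(A, z)`. -/
def blockPair (R : Type*) [CommRing R] :
    Matrix (Fin 2) (Fin 2) R × R →* Matrix (Fin 3) (Fin 3) R where
  toFun x := of ![![x.1 0 0, x.1 0 1, 0], ![x.1 1 0, x.1 1 1, 0], ![0, 0, x.2]]
  map_one' := by
    ext i j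
    fin_cases i <;> fin_cases j <;> rfl
  map_mul' x y := by
    ext i j
    fin_cases i <;> fin_cases j <;>
      simp [Matrix.mul_apply, Fin.sum_univ_two, Fin.sum_univ_three]

theorem blockPair_injective (R : Type*) [CommRing R] : Function.Injective (blockPair R) := by
  intro x y h
  have entry (i j) : blockPair R x i j = blockPair R y i j := congrFun₂ h i j
  refine Prod.ext (Matrix.ext fun i j ↦ ?_) (entry 2 2)
  fin_cases i <;> fin_cases j
  exacts [entry 0 0, entry 0 1, entry 1 0, entry 1 1]

theorem isPrimitiveRoot_I : IsPrimitiveRoot Complex.I 4 := by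
  have h := Complex.isPrimitiveRoot_exp 4 (by simp)
  rwa [show 2 * Real.pi * Complex.I / (4 : ℕ) = Real.pi / 2 * Complex.I by push_cast; ring,
    Complex.exp_pi_div_two_mul_I] at h

/-- The additive character `t ↦ i ^ t` of `ZMod 4`. -/
def psi4 : AddChar (ZMod 4) ℂ := AddChar.zmodChar 4 isPrimitiveRoot_I.pow_eq_one

theorem psi4_apply (t : ZMod 4) : psi4 t = Complex.I ^ t.val := AddChar.zmodChar_apply _ t

theorem psi4_injective : Function.Injective psi4 := zmodChar_injective isPrimitiveRoot_I

/-- The abstract group `SL(2, 5) × ℤ/4 × ℤ/5 × ℤ/5`. -/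
abbrev SL25Prod :=
  SL25 × Multiplicative (ZMod 4) × Multiplicative (ZMod 5) × Multiplicative (ZMod 5)

/-- The homomorphism `(g, u, v, w) ↦ diag(ζ₅ ^ v • icosahedral g, i ^ u * ζ₅ ^ w)`. -/
def productMatrix : SL25Prod →* Matrix (Fin 3) (Fin 3) ℂ :=
  (blockPair ℂ).comp
    { toFun x := (psi5 x.2.2.1.toAdd • icosahedral x.1,
        psi4 x.2.1.toAdd * psi5 x.2.2.2.toAdd)
      map_one' := by simp
      map_mul' x y := by
        simp [AddChar.map_add_eq_mul, mul_smul, smul_comm (psi5 x.2.2.1.toAdd),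
          mul_mul_mul_comm] }

/-- The representation `productMatrix` with values in `GL(3, ℂ)`. -/
def productRep : SL25Prod →* GL (Fin 3) ℂ := productMatrix.toHomUnits

theorem eq_zero_of_psi4_mul_psi5_eq_one {u : ZMod 4} {w : ZMod 5} (h : psi4 u * psi5 w = 1) :
    u = 0 ∧ w = 0 := by
  have psi4_pow_four : psi4 u ^ 4 = 1 := by
    rw [psi4_apply, pow_right_comm, isPrimitiveRoot_I.pow_eq_one, one_pow]
  have hw : w = 0 := by
    have psi5_eq_one : psi5 (4 • w) = 1 := by
      rw [AddChar.map_nsmul_eq_pow, ← one_mul (psi5 w ^ 4), ← psi4_pow_four, ← mul_pow, h,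
        one_pow, psi4_pow_four]
    have four_nsmul : 4 • w = 0 := psi5_injective (psi5_eq_one.trans psi5.map_zero_eq_one.symm)
    exact (by decide : ∀ w : ZMod 5, 4 • w = 0 → w = 0) w four_nsmul
  rw [hw, AddChar.map_zero_eq_one, mul_one] at h
  exact ⟨psi4_injective (h.trans psi4.map_zero_eq_one.symm), hw⟩

theorem productRep_injective : Function.Injective productRep := by
  refine (injective_iff_map_eq_one _).mpr fun ⟨g, u, v, w⟩ h ↦ ?_
  have hblock := blockPair_injective ℂ ((congrArg Units.val h).trans (blockPair ℂ).map_one.symm)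
  obtain ⟨hv, hg⟩ := eq_one_of_psi5_smul_icosahedral_eq_one (congrArg Prod.fst hblock)
  obtain ⟨hu, hw⟩ := eq_zero_of_psi4_mul_psi5_eq_one (congrArg Prod.snd hblock)
  exact Prod.ext hg (Prod.ext hu (Prod.ext hv hw))

theorem gen3_eq_map_closure {G : Type*} [Group G] (f : G →* GL (Fin 3) ℂ) (X : Set G)
    {S : Set (Matrix (Fin 3) (Fin 3) ℂ)}
    (hS : (fun x ↦ (f x : Matrix (Fin 3) (Fin 3) ℂ)) '' X = S) :
    gen3 S = (Subgroup.closure X).map f := by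
  rw [MonoidHom.map_closure, gen3, ← hS]
  congr 1
  ext g
  simp [Units.ext_iff, eq_comm]

theorem blockPair_diagonal {R : Type*} [CommRing R] (a b c : R) :
    blockPair R (!![a, 0; 0, b], c) = diagonal ![a, b, c] := by
  ext i j
  fin_cases i <;> fin_cases j <;> rfl

theorem coe_productRep (x : SL25Prod) :
    (productRep x : Matrix (Fin 3) (Fin 3) ℂ) = blockPair ℂ
      (psi5 x.2.2.1.toAdd • icosahedral x.1, psi4 x.2.1.toAdd * psi5 x.2.2.2.toAdd) :=
  rfl

theorem coe_productRep_inl (g : SL25) :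
    (productRep (g, 1) : Matrix (Fin 3) (Fin 3) ℂ) = emb (icosahedral g) := by
  simp only [coe_productRep, Prod.snd_one, Prod.fst_one, toAdd_one, AddChar.map_zero_eq_one,
    one_smul, mul_one]
  rfl

theorem coe_productRep_one_left (u : Multiplicative (ZMod 4)) (v w : Multiplicative (ZMod 5)) :
    (productRep (1, u, v, w) : Matrix (Fin 3) (Fin 3) ℂ) =
      diagonal ![psi5 v.toAdd, psi5 v.toAdd, psi4 u.toAdd * psi5 w.toAdd] := by
  rw [← blockPair_diagonal, coe_productRep, map_one, one_fin_two, smul_of]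
  simp

theorem closure_sl2Alpha_sl2Beta_weyl :
    Subgroup.closure {sl2Alpha, sl2Beta, (weyl : SL25)} = ⊤ := by
  set K := Subgroup.closure {sl2Alpha, sl2Beta, (weyl : SL25)}
  have alpha_mem : sl2Alpha ∈ K := Subgroup.subset_closure (by simp)
  have beta_mem : sl2Beta ∈ K := Subgroup.subset_closure (by simp)
  have weyl_mem : weyl ∈ K := Subgroup.subset_closure (by simp)
  have upperUnipotent_eq : upperUnipotent 3 = sl2Beta ^ 2 * sl2Alpha := by decide
  have upperUnipotent_mem : upperUnipotent 3 ∈ K :=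
    upperUnipotent_eq ▸ K.mul_mem (K.pow_mem beta_mem 2) alpha_mem
  exact eq_top_of_upperUnipotent_mem_zmod (by decide) upperUnipotent_mem weyl_mem (by decide)

theorem S21_eq_map : S21 = (Subgroup.prod ⊤ ⊥).map productRep := by
  have image_eq : (fun g ↦ ((productRep.comp (MonoidHom.inl SL25 _) g : GL (Fin 3) ℂ) :
      Matrix (Fin 3) (Fin 3) ℂ)) '' {sl2Alpha, sl2Beta, weyl} = {alpha', beta', gamma'} := by
    simp [Set.image_insert_eq, coe_productRep_inl, icosahedral_sl2Alpha, icosahedral_sl2Beta,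
      icosahedral_weyl, alpha', beta', gamma']
  rw [S21, gen3_eq_map_closure _ _ image_eq, closure_sl2Alpha_sl2Beta_weyl, ← Subgroup.map_map,
    map_inl_eq_prod_bot]

theorem gen3_singleton_eq_range {n : ℕ} (f : Multiplicative (ZMod n) →* GL (Fin 3) ℂ) :
    gen3 {(f (.ofAdd 1) : Matrix (Fin 3) (Fin 3) ℂ)} = f.range := by
  have closure_eq_top : Subgroup.closure {(.ofAdd 1 : Multiplicative (ZMod n))} = ⊤ :=
    eq_top_of_ofAdd_one_mem (Subgroup.mem_closure_singleton_self _)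
  rw [gen3_eq_map_closure f {.ofAdd 1} (by simp), closure_eq_top, MonoidHom.range_eq_map]

theorem psi4_one : psi4 1 = Complex.I := (psi4_apply 1).trans (pow_one _)

theorem psi5_one : psi5 1 = zeta5 := (psi5_apply 1).trans (pow_one _)

theorem Ci_eq_map : Ci = (Subgroup.prod ⊥ (Subgroup.prod ⊤ ⊥)).map productRep := by
  rw [← map_inl_eq_prod_bot, ← map_inr_eq_bot_prod, ← MonoidHom.range_eq_map,
    ← MonoidHom.range_comp, ← MonoidHom.range_comp, ← gen3_singleton_eq_range]
  have coe_eq := coe_productRep_one_left (.ofAdd 1) 1 1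
  simp only [toAdd_ofAdd, psi4_one, toAdd_one, AddChar.map_zero_eq_one, mul_one] at coe_eq
  exact congrArg (fun A ↦ gen3 {A}) coe_eq.symm

theorem Dz_eq_map :
    Dz = (Subgroup.prod ⊥ (Subgroup.prod ⊥ (Subgroup.prod ⊤ ⊥))).map productRep := by
  rw [← map_inl_eq_prod_bot, ← map_inr_eq_bot_prod, ← map_inr_eq_bot_prod,
    ← MonoidHom.range_eq_map, ← MonoidHom.range_comp, ← MonoidHom.range_comp,
    ← MonoidHom.range_comp, ← gen3_singleton_eq_range]
  simp [Dz, coe_productRep_one_left, psi5_one]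

theorem Lz_eq_map :
    Lz = (Subgroup.prod ⊥ (Subgroup.prod ⊥ (Subgroup.prod ⊥ ⊤))).map productRep := by
  rw [← map_inr_eq_bot_prod, ← map_inr_eq_bot_prod, ← map_inr_eq_bot_prod,
    ← MonoidHom.range_eq_map, ← MonoidHom.range_comp, ← MonoidHom.range_comp,
    ← MonoidHom.range_comp, ← gen3_singleton_eq_range]
  simp [Lz, coe_productRep_one_left, psi5_one]

/-- The preimage of `sigma` under `productRep`. -/
def sigmaLift : SL25Prod := (sl2Sigma, 1)

/-- The preimage of `tau` under `productRep`. -/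
def tauLift : SL25Prod := (upperUnipotent 3, 1, .ofAdd 3, 1)

/-- The preimage of `lambda20` under `productRep`. -/
def lambdaLift : SL25Prod := (1, .ofAdd 1, 1, .ofAdd 4)

theorem coe_productRep_sigmaLift : (productRep sigmaLift : Matrix (Fin 3) (Fin 3) ℂ) = sigma := by
  rw [sigmaLift, coe_productRep_inl, icosahedral_sl2Sigma]
  ext i j
  fin_cases i <;> fin_cases j <;> simp [emb, sigma] <;> ring

theorem coe_productRep_tauLift : (productRep tauLift : Matrix (Fin 3) (Fin 3) ℂ) = tau := by
  have psi5_three : psi5 3 = zeta5 ^ 3 := psi5_apply 3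
  simp [coe_productRep, tauLift, psi5_three, zeta5_pow_three_smul_icosahedral_upperUnipotent,
    blockPair_diagonal, tau]

theorem coe_productRep_lambdaLift :
    (productRep lambdaLift : Matrix (Fin 3) (Fin 3) ℂ) = lambda20 := by
  have exp_eq : Complex.exp (2 * Real.pi * Complex.I / 20) = Complex.I * zeta5 ^ 4 := by
    have zeta5_mul_exp :
        zeta5 * Complex.exp (2 * Real.pi * Complex.I / 20) = Complex.I := by
      rw [zeta5, ← Complex.exp_add, show 2 * (Real.pi : ℂ) * Complex.I / 5 +
        2 * Real.pi * Complex.I / 20 = Real.pi / 2 * Complex.I by ring,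
        Complex.exp_pi_div_two_mul_I]
    linear_combination -Complex.exp (2 * Real.pi * Complex.I / 20) *
      isPrimitiveRoot_zeta5.pow_eq_one + zeta5 ^ 4 * zeta5_mul_exp
  have psi5_four : psi5 4 = zeta5 ^ 4 := psi5_apply 4
  simp [lambdaLift, coe_productRep_one_left, psi4_one, psi5_four, lambda20, exp_eq]

theorem closure_sigmaLift_tauLift_lambdaLift :
    Subgroup.closure {sigmaLift, tauLift, lambdaLift} = ⊤ := by
  set K := Subgroup.closure {sigmaLift, tauLift, lambdaLift}
  have sigma_mem : sigmaLift ∈ K := Subgroup.subset_closure (by simp)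
  have tau_mem : tauLift ∈ K := Subgroup.subset_closure (by simp)
  have lambda_mem : lambdaLift ∈ K := Subgroup.subset_closure (by simp)
  have quarter_mem : ((1, .ofAdd 1, 1) : SL25Prod) ∈ K :=
    (by decide : lambdaLift ^ 5 = (1, .ofAdd 1, 1)) ▸ K.pow_mem lambda_mem 5
  have fifth_mem : ((1, 1, 1, .ofAdd 1) : SL25Prod) ∈ K :=
    (by decide : lambdaLift ^ 4 = (1, 1, 1, .ofAdd 1)) ▸ K.pow_mem lambda_mem 4
  have scalar_mem : ((1, 1, .ofAdd 1, 1) : SL25Prod) ∈ K :=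
    (by decide : (sigmaLift * tauLift) ^ 12 = (1, 1, .ofAdd 1, 1)) ▸
      K.pow_mem (K.mul_mem sigma_mem tau_mem) 12
  have unipotent_mem : ((upperUnipotent 3, 1) : SL25Prod) ∈ K :=
    (by decide : tauLift * (1, 1, .ofAdd 1, 1) ^ 2 = (upperUnipotent 3, 1)) ▸
      K.mul_mem tau_mem (K.pow_mem scalar_mem 2)
  refine eq_top_of_comap_inl_of_comap_inr ?_ (eq_top_of_comap_inl_of_comap_inr ?_
    (eq_top_of_comap_inl_of_comap_inr ?_ ?_))
  · exact eq_top_of_upperUnipotent_mem_zmod (by decide) unipotent_mem sigma_mem (by decide)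
  · exact eq_top_of_ofAdd_one_mem quarter_mem
  · exact eq_top_of_ofAdd_one_mem scalar_mem
  · exact eq_top_of_ofAdd_one_mem fifth_mem

theorem Gt20_eq_range : Gt20 = productRep.range := by
  have image_eq : (fun x ↦ (productRep x : Matrix (Fin 3) (Fin 3) ℂ)) ''
      {sigmaLift, tauLift, lambdaLift} = {sigma, tau, lambda20} := by
    simp [Set.image_insert_eq, coe_productRep_sigmaLift, coe_productRep_tauLift,
      coe_productRep_lambdaLift]
  rw [Gt20, gen3_eq_map_closure _ _ image_eq, closure_sigmaLift_tauLift_lambdaLift,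
    MonoidHom.range_eq_map]

theorem nonempty_Gt20_mulEquiv : Nonempty (Gt20 ≃* SL25Prod) :=
  ⟨(MulEquiv.subgroupCongr Gt20_eq_range).trans
    (MonoidHom.ofInjective productRep_injective).symm⟩

theorem card_SL25Prod : Nat.card SL25Prod = 12000 := by
  simp only [Nat.card_prod, card_SL25, Nat.card_congr Multiplicative.toAdd, Nat.card_zmod]

end ProductRepresentation

theorem stmt14 :
    (∀ a ∈ S21, ∀ b ∈ Ci, a * b = b * a) ∧
    (∀ a ∈ S21, ∀ b ∈ Dz, a * b = b * a) ∧
    (∀ a ∈ S21, ∀ b ∈ Lz, a * b = b * a) ∧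
    (∀ a ∈ Ci, ∀ b ∈ Dz, a * b = b * a) ∧
    (∀ a ∈ Ci, ∀ b ∈ Lz, a * b = b * a) ∧
    (∀ a ∈ Dz, ∀ b ∈ Lz, a * b = b * a) ∧
    S21 ⊓ Ci = ⊥ ∧
    (S21 ⊔ Ci) ⊓ Dz = ⊥ ∧
    (S21 ⊔ Ci ⊔ Dz) ⊓ Lz = ⊥ ∧
    S21 ⊔ Ci ⊔ Dz ⊔ Lz = Gt20 ∧
    Nonempty (Gt20 ≃*
      SL25 × Multiplicative (ZMod 4) × Multiplicative (ZMod 5) × Multiplicative (ZMod 5)) ∧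
    Nat.card Gt20 = 12000 := by
  have commute {H K : Subgroup SL25Prod} [H.Normal] [K.Normal] (h : H ⊓ K = ⊥) :=
    mul_comm_of_mem_map_of_disjoint (disjoint_iff.mpr h) productRep
  have inf_eq_bot {H K : Subgroup SL25Prod} (h : H ⊓ K = ⊥) :=
    (Subgroup.disjoint_map productRep_injective (disjoint_iff.mpr h)).eq_bot
  obtain ⟨iso⟩ := nonempty_Gt20_mulEquiv
  have card_Gt20 : Nat.card Gt20 = 12000 := (Nat.card_congr iso.toEquiv).trans card_SL25Prod
  rw [S21_eq_map, Ci_eq_map, Dz_eq_map, Lz_eq_map]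
  simp only [← Subgroup.map_sup]
  refine ⟨commute ?_, commute ?_, commute ?_, commute ?_, commute ?_, commute ?_,
    inf_eq_bot ?_, inf_eq_bot ?_, inf_eq_bot ?_, ?sup_eq, ⟨iso⟩, card_Gt20⟩
  case sup_eq => simp [prod_sup_prod, Gt20_eq_range, MonoidHom.range_eq_map]
  all_goals simp [prod_sup_prod, prod_inf_prod]
end
end

section
/- Let Q be the quotient of the subgroup ⟨S(2,1), diag(1,1,i)⟩ ⊆ GL(3,ℂ) by its central subgroup ⟨−I₃⟩. The map δ : Q → {±1} induced by sending a matrix with lower-right 2×2 block zero off the third row/column and (3,3)-entry a to a² is a well-defined surjective group homomorphism whose kernel is isomorphic to SL(2,5), and δ admits a group-theoretic section sending −1 to the class of the matrix [[0,1,0],[−1,0,0],[0,0,i]]. Consequently there exists a homomorphism φ : ℤ/2 → Aut(SL(2,5)) with Q ≅ SL(2,5) ⋊_φ ℤ/2. -/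
noncomputable section
open Matrix

/-- `T = ⟨S(2,1), diag(1,1,i)⟩`. -/
def T : Subgroup (GL (Fin 3) ℂ) := S21 ⊔ gen3 {Matrix.diagonal ![1, 1, Complex.I]}

/-- The central subgroup `⟨-I₃⟩` of `T`. -/
def N : Subgroup T :=
  Subgroup.closure {t : T | ((t : GL (Fin 3) ℂ) : Matrix (Fin 3) (Fin 3) ℂ) = -1}

lemma N_le_center : N ≤ Subgroup.center T := by
  rw [N, Subgroup.closure_le]
  intro t ht
  rw [SetLike.mem_coe, Subgroup.mem_center_iff]
  intro g
  refine Subtype.ext (Units.ext ?_)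
  show ((g : GL (Fin 3) ℂ) : Matrix (Fin 3) (Fin 3) ℂ) * ((t : GL (Fin 3) ℂ) : Matrix (Fin 3) (Fin 3) ℂ)
      = ((t : GL (Fin 3) ℂ) : Matrix (Fin 3) (Fin 3) ℂ) * ((g : GL (Fin 3) ℂ) : Matrix (Fin 3) (Fin 3) ℂ)
  rw [ht]
  simp

instance : N.Normal := by
  constructor
  intro n hn g
  have hc := Subgroup.mem_center_iff.mp (N_le_center hn) g
  rw [hc, mul_assoc, mul_inv_cancel, mul_one]
  exact hn

/-- `Q = ⟨S(2,1), diag(1,1,i)⟩ / ⟨-I₃⟩`. -/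
abbrev Q := T ⧸ N

/-!
Let `G = ⟨alpha, beta, gamma⟩` and `ζ = zeta5`. In the basis `e₁, γ e₁` of `ℂ²` the generators have
entries in `ℤ[ζ]`, and reducing them modulo `ζ - 1` gives a homomorphism from `G` onto `SL(2, 5)`.

It is injective. If `g` reduces to `1`, comparing `g` with its complex conjugate, to which it is
conjugate through an explicit matrix that is scalar modulo `ζ - 1`, improves `g ≡ 1` to a congruence
modulo `(ζ - 1)²`. Hence `(ζ - 1)⁴` divides `det (g - 1)`, whose norm is thus divisible by `5⁴`.
But under every complex embedding `g` is conjugate to a unit quaternion, so `|det (g - 1)| ≤ 4`, and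
the norm is at most `4⁴ < 5⁴`. So `det (g - 1) = 0`, and as the quaternions form a division algebra,
`g = 1`.

Finally `T` consists of the matrices `diag(g, a)` with `g ∈ G` and `a⁴ = 1`. Since `-1 = β² ∈ G`,
each class of `Q` with `a² = 1` has exactly one representative with `a = 1`, and `diag(β, i)` has
square `-1`, so its class splits `a ↦ a²`.
-/

lemma semiconjBy_of_mem_closure {G M : Type*} [Group G] [Monoid M] {f g : G →* M} {a : M}
    {s : Set G} (hs : ∀ x ∈ s, SemiconjBy a (f x) (g x)) {x : G}
    (hx : x ∈ Subgroup.closure s) : SemiconjBy a (f x) (g x) := by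
  induction hx using Subgroup.closure_induction with
  | mem x hx => exact hs x hx
  | one => rw [map_one, map_one]; exact SemiconjBy.one_right a
  | mul x y _ _ hx hy => rw [map_mul, map_mul]; exact hx.mul_right hy
  | inv x _ hx =>
    have hx' : SemiconjBy a (f.toHomUnits x) (g.toHomUnits x) := hx
    rw [← f.coe_toHomUnits, ← g.coe_toHomUnits, map_inv, map_inv]
    exact hx'.units_inv_right

lemma specialLinearGroup_map_injective {n R S : Type*} [Fintype n] [DecidableEq n] [CommRing R]
    [CommRing S] {f : R →+* S} (hf : Function.Injective f) :
    Function.Injective (SpecialLinearGroup.map (n := n) f) := by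
  intro A B hAB
  exact Subtype.ext (map_injective hf congr(($hAB : Matrix n n S)))

section CyclotomicRoots

open Polynomial

variable {R S : Type*} [CommRing R] [CommRing S]

lemma isRoot_cyclotomic_map {n : ℕ} {z : R} (f : R →+* S) (hz : (cyclotomic n R).IsRoot z) :
    (cyclotomic n S).IsRoot (f z) := by
  simpa using hz.map (f := f)

lemma isRoot_cyclotomic_five_iff {z : R} :
    (cyclotomic 5 R).IsRoot z ↔ z ^ 4 + z ^ 3 + z ^ 2 + z + 1 = 0 := by
  have : Fact (Nat.Prime 5) := ⟨by norm_num⟩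
  rw [cyclotomic_prime, IsRoot.def, eval_geom_sum]
  simp only [Finset.sum_range_succ, Finset.sum_range_zero]
  constructor <;> intro h <;> linear_combination h

lemma ne_one_of_isRoot_cyclotomic_five [CharZero R] {z : R} (hz : (cyclotomic 5 R).IsRoot z) :
    z ≠ 1 := by
  rintro rfl
  have := isRoot_cyclotomic_five_iff.mp hz
  norm_num at this

end CyclotomicRoots

section IntegralModel

open Polynomial
open scoped MatrixGroups

variable {R S : Type*} [CommRing R] [CommRing S] {z : R}

/-- The matrix of `alpha` in the basis `e₁, γ e₁` of `ℂ²`, with `zeta5` replaced by an arbitrary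
root of the fifth cyclotomic polynomial. -/
def integralAlpha (hz : (cyclotomic 5 R).IsRoot z) : SL(2, R) :=
  ⟨!![-z ^ 3, z + z ^ 4; 0, -z ^ 2], by
    rw [isRoot_cyclotomic_five_iff] at hz
    rw [det_fin_two_of]
    linear_combination (z - 1) * hz⟩

/-- The matrix of `beta` in the basis `e₁, γ e₁`; see `integralAlpha`. -/
def integralBeta (hz : (cyclotomic 5 R).IsRoot z) : SL(2, R) :=
  ⟨!![z + z ^ 4, z ^ 3 - z ^ 2; z ^ 3 - z ^ 2, -(z + z ^ 4)], by
    rw [isRoot_cyclotomic_five_iff] at hz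
    rw [det_fin_two_of]
    linear_combination (-z ^ 4 + z ^ 3 - z ^ 2 + z - 1) * hz⟩

variable (R) in
/-- The matrix of `gamma` in the basis `e₁, γ e₁`; see `integralAlpha`. -/
def integralGamma : SL(2, R) :=
  ⟨!![0, -1; 1, 0], by simp⟩

@[simp] lemma coe_integralAlpha (hz : (cyclotomic 5 R).IsRoot z) :
    (integralAlpha hz : Matrix (Fin 2) (Fin 2) R) = !![-z ^ 3, z + z ^ 4; 0, -z ^ 2] := rfl

@[simp] lemma coe_integralBeta (hz : (cyclotomic 5 R).IsRoot z) :
    (integralBeta hz : Matrix (Fin 2) (Fin 2) R) =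
      !![z + z ^ 4, z ^ 3 - z ^ 2; z ^ 3 - z ^ 2, -(z + z ^ 4)] := rfl

@[simp] lemma coe_integralGamma :
    (integralGamma R : Matrix (Fin 2) (Fin 2) R) = !![0, -1; 1, 0] := rfl

/-- The group generated by `alpha`, `beta` and `gamma`, written in the basis `e₁, γ e₁` in which
its entries are polynomials in `zeta5`; see `integralAlpha`. -/
def integralGroup (hz : (cyclotomic 5 R).IsRoot z) : Subgroup SL(2, R) :=
  Subgroup.closure {integralAlpha hz, integralBeta hz, integralGamma R}

lemma map_integralGroup (f : R →+* S) (hz : (cyclotomic 5 R).IsRoot z) :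
    (integralGroup hz).map (SpecialLinearGroup.map f) =
      integralGroup (isRoot_cyclotomic_map f hz) := by
  have hα : SpecialLinearGroup.map f (integralAlpha hz) =
      integralAlpha (isRoot_cyclotomic_map f hz) := by
    ext i j; fin_cases i <;> fin_cases j <;> simp
  have hβ : SpecialLinearGroup.map f (integralBeta hz) =
      integralBeta (isRoot_cyclotomic_map f hz) := by
    ext i j; fin_cases i <;> fin_cases j <;> simp
  have hγ : SpecialLinearGroup.map f (integralGamma R) = integralGamma S := by
    ext i j; fin_cases i <;> fin_cases j <;> simp
  rw [integralGroup, MonoidHom.map_closure, Set.image_insert_eq, Set.image_pair, hα, hβ, hγ,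
    integralGroup]

lemma map_mem_integralGroup (f : R →+* S) {hz : (cyclotomic 5 R).IsRoot z} {g : SL(2, R)}
    (hg : g ∈ integralGroup hz) :
    SpecialLinearGroup.map f g ∈ integralGroup (isRoot_cyclotomic_map f hz) :=
  map_integralGroup f hz ▸ Subgroup.mem_map_of_mem _ hg

/-- The matrix through which the group of `integralGroup` is intertwined with its Galois conjugate
under `z ↦ z⁴`. -/
def conjIntertwiner (z : R) : Matrix (Fin 2) (Fin 2) R :=
  !![z + z ^ 4, z ^ 2 - z ^ 3; z ^ 3 - z ^ 2, z + z ^ 4]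

lemma semiconjBy_conjIntertwiner {hz : (cyclotomic 5 R).IsRoot z} {σ : R →+* R}
    (hσ : σ z = z ^ 4) {g : SL(2, R)} (hg : g ∈ integralGroup hz) :
    SemiconjBy (conjIntertwiner z) (g.map σ : SL(2, R)) (g : Matrix (Fin 2) (Fin 2) R) := by
  have h5 : z ^ 5 = 1 := by linear_combination (z - 1) * isRoot_cyclotomic_five_iff.mp hz
  refine semiconjBy_of_mem_closure
    (f := SpecialLinearGroup.coeMonoidHom.comp (SpecialLinearGroup.map σ))
    (g := SpecialLinearGroup.coeMonoidHom) (fun x hx ↦ ?_) hg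
  simp only [MonoidHom.comp_apply, SpecialLinearGroup.coeMonoidHom_apply,
    SpecialLinearGroup.map_apply_coe]
  obtain rfl | rfl | rfl := hx <;> ext i j <;> fin_cases i <;> fin_cases j <;>
    simp [conjIntertwiner, mul_apply, hσ, Fin.sum_univ_two] <;> grind

end IntegralModel

section ModFive

open Polynomial Matrix.SpecialLinearGroup
open scoped MatrixGroups

lemma transvection_natCast_mul {ι R : Type*} [Fintype ι] [DecidableEq ι] [CommRing R] {i j : ι}
    (hij : i ≠ j) (n : ℕ) (b : R) : transvection hij (n * b) = transvection hij b ^ n := by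
  induction n with
  | zero => simp
  | succ n ih => rw [Nat.cast_succ, add_one_mul, transvection_add, ih, pow_succ]

lemma eq_top_of_transvection_mem {p : ℕ} [Fact p.Prime] {H : Subgroup SL(2, ZMod p)}
    (h₀₁ : transvection zero_ne_one 1 ∈ H) (h₁₀ : transvection one_ne_zero 1 ∈ H) : H = ⊤ := by
  refine (Subgroup.eq_top_iff' H).mpr fun g ↦
    SL2.transvection_induction (· ∈ H) (fun i j hij c ↦ ?_) (fun _ _ ↦ mul_mem) g
  have hc : c = c.val * 1 := by simp
  rw [hc, transvection_natCast_mul]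
  refine pow_mem ?_ _
  fin_cases i <;> fin_cases j
  exacts [absurd rfl hij, h₀₁, h₁₀, absurd rfl hij]

lemma isRoot_cyclotomic_five_one : (cyclotomic 5 (ZMod 5)).IsRoot 1 := by
  rw [isRoot_cyclotomic_five_iff]; rfl

lemma integralGroup_one_eq_top : integralGroup isRoot_cyclotomic_five_one = ⊤ := by
  have : Fact (Nat.Prime 5) := ⟨by norm_num⟩
  have hα : integralAlpha isRoot_cyclotomic_five_one ∈ integralGroup isRoot_cyclotomic_five_one :=
    Subgroup.subset_closure (by simp)
  have hγ : integralGamma (ZMod 5) ∈ integralGroup isRoot_cyclotomic_five_one :=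
    Subgroup.subset_closure (by simp)
  have h₀₁ : integralAlpha isRoot_cyclotomic_five_one ^ 2 = transvection zero_ne_one 1 := by
    ext i j; fin_cases i <;> fin_cases j <;> simp [transvection_coe, pow_two]; rfl
  have h₁₀ : integralGamma (ZMod 5) * (transvection zero_ne_one 1)⁻¹ * (integralGamma (ZMod 5))⁻¹ =
      transvection one_ne_zero 1 := by
    rw [mul_inv_eq_iff_eq_mul, transvection_inv]
    ext i j; fin_cases i <;> fin_cases j <;>
      simp [transvection_coe, Matrix.mul_apply, Fin.sum_univ_two]
  exact eq_top_of_transvection_mem (h₀₁ ▸ pow_mem hα 2)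
    (h₁₀ ▸ mul_mem (mul_mem hγ (inv_mem (h₀₁ ▸ pow_mem hα 2))) (inv_mem hγ))

end ModFive

section Residue

open Polynomial
open scoped MatrixGroups

variable {R : Type*} [CommRing R]

lemma exists_ringHom_zmod_ker_eq {p : ℕ} [Fact p.Prime] {I : Ideal R}
    (hI : Nat.card (R ⧸ I) = p) : ∃ π : R →+* ZMod p, RingHom.ker π = I := by
  have hp : p.Prime := Fact.out
  have : Finite (R ⧸ I) := Nat.finite_of_card_ne_zero (hI ▸ hp.ne_zero)
  have := Fintype.ofFinite (R ⧸ I)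
  let e : ZMod p ≃+* R ⧸ I := ZMod.ringEquivOfPrime _ hp (by rw [← Nat.card_eq_fintype_card, hI])
  refine ⟨(e.symm : R ⧸ I →+* ZMod p).comp (Ideal.Quotient.mk I), ?_⟩
  ext x
  simp [RingHom.mem_ker, Ideal.Quotient.eq_zero_iff_mem]

lemma map_ringEquiv_apply_of_associated {n : ℕ} {π : R →+* ZMod n} {y : R} {σ : R ≃+* R}
    (hπ : RingHom.ker π = Ideal.span {y}) (hσ : Associated (σ y) y) (x : R) : π (σ x) = π x := by
  suffices π.comp (σ : R →+* R) = π from congr($this x)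
  refine ZMod.ringHom_eq_of_ker_eq _ _ ?_
  ext x
  calc x ∈ RingHom.ker (π.comp (σ : R →+* R))
    _ ↔ y ∣ σ x := by
      rw [← Ideal.mem_span_singleton, ← hπ]; rfl
    _ ↔ y ∣ x := by rw [← hσ.dvd_iff_dvd_left, map_dvd_iff]
    _ ↔ x ∈ RingHom.ker π := by rw [hπ, Ideal.mem_span_singleton]

lemma dvd_sub_one_apply_of_map_eq_one {S n : Type*} [CommRing S] [Fintype n] [DecidableEq n]
    {π : R →+* S} {y : R} (hπ : RingHom.ker π = Ideal.span {y}) {g : SpecialLinearGroup n R}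
    (hg : SpecialLinearGroup.map π g = 1) (i j : n) : y ∣ ((g : Matrix n n R) - 1) i j := by
  have hij := congr(($hg : Matrix n n S) i j)
  rw [SpecialLinearGroup.map_apply_coe] at hij
  rw [← Ideal.mem_span_singleton, ← hπ, RingHom.mem_ker, Matrix.sub_apply, map_sub, sub_eq_zero]
  simpa [one_apply, apply_ite π] using hij

variable {z : R}

lemma map_sub_one_of_map_eq_pow_four (hz : (cyclotomic 5 R).IsRoot z) {σ : R →+* R}
    (hσ : σ z = z ^ 4) : σ (z - 1) = -z ^ 4 * (z - 1) := by
  rw [map_sub, hσ, map_one]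
  linear_combination (z - 1) * isRoot_cyclotomic_five_iff.mp hz

lemma semiconjBy_conjIntertwiner_of_eq_one_add_smul [IsDomain R]
    {hz : (cyclotomic 5 R).IsRoot z} (hz1 : z ≠ 1) {σ : R →+* R} (hσ : σ z = z ^ 4)
    {g : SL(2, R)} (hg : g ∈ integralGroup hz) {h : Matrix (Fin 2) (Fin 2) R}
    (hgh : (g : Matrix (Fin 2) (Fin 2) R) = 1 + (z - 1) • h) :
    SemiconjBy (conjIntertwiner z) (-z ^ 4 • h.map σ) h := by
  have hσg : ((g.map σ : SL(2, R)) : Matrix (Fin 2) (Fin 2) R) =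
      1 + (z - 1) • (-z ^ 4 • h.map σ) := by
    rw [SpecialLinearGroup.map_apply_coe, hgh, map_add, map_one, smul_smul, mul_comm,
      ← map_sub_one_of_map_eq_pow_four hz hσ]
    ext i j
    simp
  have key := (semiconjBy_conjIntertwiner hσ hg).eq
  rw [hσg, hgh, mul_add, mul_one, add_mul, one_mul, add_right_inj, Matrix.mul_smul,
    Matrix.smul_mul] at key
  exact smul_right_injective _ (sub_ne_zero.mpr hz1) key

lemma map_apply_of_map_eq_pow_four (hz : (cyclotomic 5 R).IsRoot z) {n : ℕ} {σ : R ≃+* R}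
    (hσ : σ z = z ^ 4) {π : R →+* ZMod n} (hπ : RingHom.ker π = Ideal.span {z - 1}) (x : R) :
    π (σ x) = π x := by
  have hz5 : z ^ 5 = 1 := by linear_combination (z - 1) * isRoot_cyclotomic_five_iff.mp hz
  refine map_ringEquiv_apply_of_associated hπ ?_ x
  rw [← RingEquiv.coe_toRingHom, map_sub_one_of_map_eq_pow_four (σ := (σ : R →+* R)) hz hσ]
  exact associated_unit_mul_left _ _ (IsUnit.of_mul_eq_one (-z) (by linear_combination hz5))

-- Write `g = 1 + (z - 1) h`. Comparing `g` with its conjugate under `σ`, and using that the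
-- intertwiner is the scalar `2` modulo `z - 1`, gives `2h ≡ -2h`.
lemma sub_one_sq_dvd_of_map_eq_one [IsDomain R] {hz : (cyclotomic 5 R).IsRoot z} (hz1 : z ≠ 1)
    {σ : R ≃+* R} (hσ : σ z = z ^ 4) {π : R →+* ZMod 5} (hπ : RingHom.ker π = Ideal.span {z - 1})
    {g : SL(2, R)} (hg : g ∈ integralGroup hz) (hg1 : SpecialLinearGroup.map π g = 1)
    (i j : Fin 2) : (z - 1) ^ 2 ∣ ((g : Matrix (Fin 2) (Fin 2) R) - 1) i j := by
  have hdvd (x : R) : z - 1 ∣ x ↔ π x = 0 := by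
    rw [← RingHom.mem_ker, hπ, Ideal.mem_span_singleton]
  have hπz : π z = 1 := by
    rw [← sub_eq_zero, ← map_one π, ← map_sub, ← hdvd]
  choose h hh using dvd_sub_one_apply_of_map_eq_one hπ hg1
  have hgh : (g : Matrix (Fin 2) (Fin 2) R) = 1 + (z - 1) • Matrix.of h := by
    rw [← sub_eq_iff_eq_add']
    ext i j
    exact hh i j
  have hS : (conjIntertwiner z).map π = (2 : ZMod 5) • 1 := by
    ext i j; fin_cases i <;> fin_cases j <;> simp [conjIntertwiner, hπz, one_add_one_eq_two]
  have hσh : (-z ^ 4 • (Matrix.of h).map (σ : R →+* R)).map π = -(Matrix.of h).map π := by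
    ext i j; simp [hπz, map_apply_of_map_eq_pow_four hz hσ hπ]
  have hsemi := semiconjBy_conjIntertwiner_of_eq_one_add_smul hz1 (σ := (σ : R →+* R)) hσ hg hgh
  have key := congr(Matrix.map $(hsemi.eq) π)
  rw [Matrix.map_mul, Matrix.map_mul, hS, hσh, Matrix.smul_mul, one_mul, Matrix.mul_smul,
    mul_one] at key
  have hπh : π (h i j) = 0 := by
    have eq_zero_of_two_mul_neg : ∀ x : ZMod 5, 2 * -x = 2 * x → x = 0 := by decide
    exact eq_zero_of_two_mul_neg _ congr($key i j)
  rw [hh, pow_two]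
  exact mul_dvd_mul_left _ ((hdvd _).mpr hπh)

lemma sub_one_pow_four_dvd_det [IsDomain R] {hz : (cyclotomic 5 R).IsRoot z} (hz1 : z ≠ 1)
    {σ : R ≃+* R} (hσ : σ z = z ^ 4) {π : R →+* ZMod 5} (hπ : RingHom.ker π = Ideal.span {z - 1})
    {g : SL(2, R)} (hg : g ∈ integralGroup hz) (hg1 : SpecialLinearGroup.map π g = 1) :
    (z - 1) ^ 4 ∣ ((g : Matrix (Fin 2) (Fin 2) R) - 1).det := by
  have hdvd := sub_one_sq_dvd_of_map_eq_one hz1 hσ hπ hg hg1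
  rw [det_fin_two, show (z - 1) ^ 4 = (z - 1) ^ 2 * (z - 1) ^ 2 by ring]
  exact dvd_sub (mul_dvd_mul (hdvd _ _) (hdvd _ _)) (mul_dvd_mul (hdvd _ _) (hdvd _ _))

end Residue

section Norm

open NumberField Module

variable {K : Type*} [Field K] [NumberField K]

lemma abs_norm_le_pow {x : K} {B : ℝ} (hB : ∀ φ : K →+* ℂ, ‖φ x‖ ≤ B) :
    |(Algebra.norm ℚ x : ℝ)| ≤ B ^ finrank ℚ K := by
  calc |(Algebra.norm ℚ x : ℝ)|
    _ = ‖algebraMap ℚ ℂ (Algebra.norm ℚ x)‖ := by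
      rw [eq_ratCast, Complex.norm_ratCast]
    _ = ∏ φ : K →ₐ[ℚ] ℂ, ‖φ x‖ := by rw [Algebra.norm_eq_prod_embeddings, norm_prod]
    _ ≤ ∏ _φ : K →ₐ[ℚ] ℂ, B := by gcongr with φ; exact hB φ
    _ = B ^ finrank ℚ K := by
      rw [Finset.prod_const, Finset.card_univ, AlgHom.card]

lemma eq_zero_of_dvd_of_norm_le {x y : 𝓞 K} (hyx : y ∣ x) {B : ℝ}
    (hB : ∀ φ : K →+* ℂ, ‖φ x‖ ≤ B) (hy : B ^ finrank ℚ K < |(Algebra.norm ℤ y : ℝ)|) : x = 0 := by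
  by_contra hx
  have hyx' : |Algebra.norm ℤ y| ≤ |Algebra.norm ℤ x| :=
    Int.le_of_dvd (abs_pos.mpr (Algebra.norm_ne_zero_iff.mpr hx))
      ((abs_dvd_abs _ _).mpr (map_dvd _ hyx))
  refine hy.not_ge ?_
  calc |(Algebra.norm ℤ y : ℝ)|
    _ ≤ |(Algebra.norm ℤ x : ℝ)| := mod_cast hyx'
    _ = |(Algebra.norm ℚ (x : K) : ℝ)| := by rw [← Algebra.coe_norm_int, Rat.cast_intCast]
    _ ≤ B ^ finrank ℚ K := abs_norm_le_pow hB

end Norm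

section Quaternionic

open Polynomial ComplexConjugate
open scoped MatrixGroups

/-- The `2 × 2` complex matrices representing the elements of Hamilton's quaternions. They are the
matrices which commute with the conjugate-linear map `v ↦ J v̄`, where `J = !![0, 1; -1, 0]`. -/
def IsQuaternionic (A : Matrix (Fin 2) (Fin 2) ℂ) : Prop :=
  ∃ a b : ℂ, A = !![a, b; -conj b, conj a]

lemma isQuaternionic_of_semiconjBy {A : Matrix (Fin 2) (Fin 2) ℂ}
    (hA : SemiconjBy !![0, 1; -1, 0] (A.map conj) A) : IsQuaternionic A := by
  refine ⟨A 0 0, A 0 1, ?_⟩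
  have h00 := congr($hA.eq 0 0)
  have h01 := congr($hA.eq 0 1)
  simp only [mul_apply, Fin.sum_univ_two, of_apply, cons_val', cons_val_zero, cons_val_one,
    cons_val_fin_one, map_apply, zero_mul, one_mul, zero_add, mul_zero, mul_neg, mul_one,
    add_zero] at h00 h01
  ext i j; fin_cases i <;> fin_cases j <;> simp [← h01, ← map_neg, ← h00]

namespace IsQuaternionic

variable {A : Matrix (Fin 2) (Fin 2) ℂ}

lemma sub_one (hA : IsQuaternionic A) : IsQuaternionic (A - 1) := by
  obtain ⟨a, b, rfl⟩ := hA
  exact ⟨a - 1, b, by ext i j; fin_cases i <;> fin_cases j <;> simp⟩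

lemma det_eq (hA : IsQuaternionic A) : A.det = (‖A 0 0‖ ^ 2 + ‖A 0 1‖ ^ 2 : ℝ) := by
  obtain ⟨a, b, rfl⟩ := hA
  simp [det_fin_two, Complex.mul_conj']

lemma eq_zero_of_det_eq_zero (hA : IsQuaternionic A) (hdet : A.det = 0) : A = 0 := by
  have hnorm : ‖A 0 0‖ ^ 2 + ‖A 0 1‖ ^ 2 = 0 := by exact_mod_cast hA.det_eq ▸ hdet
  obtain ⟨ha, hb⟩ := (add_eq_zero_iff_of_nonneg (sq_nonneg _) (sq_nonneg _)).mp hnorm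
  rw [sq_eq_zero_iff, norm_eq_zero] at ha hb
  obtain ⟨a, b, rfl⟩ := hA
  obtain rfl : a = 0 := ha
  obtain rfl : b = 0 := hb
  ext i j; fin_cases i <;> fin_cases j <;> simp

lemma norm_det_sub_one_le (hA : IsQuaternionic A) (hdet : A.det = 1) : ‖(A - 1).det‖ ≤ 4 := by
  have hnorm : ‖A 0 0‖ ^ 2 + ‖A 0 1‖ ^ 2 = 1 := by exact_mod_cast hA.det_eq ▸ hdet
  have ha : ‖A 0 0‖ ≤ 1 := by nlinarith [norm_nonneg (A 0 0), sq_nonneg ‖A 0 1‖]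
  have hsub : ‖A 0 0 - 1‖ ≤ ‖A 0 0‖ + 1 := by simpa using norm_sub_le (A 0 0) 1
  rw [hA.sub_one.det_eq, Complex.norm_real, Real.norm_of_nonneg (by positivity), Matrix.sub_apply,
    Matrix.sub_apply, one_apply_eq, one_apply_ne zero_ne_one, sub_zero]
  nlinarith [norm_nonneg (A 0 0 - 1)]

end IsQuaternionic

variable {w : ℂ}

lemma conj_eq_pow_four (hw : (cyclotomic 5 ℂ).IsRoot w) : conj w = w ^ 4 := by
  have hw5 : w ^ 5 = 1 := by linear_combination (w - 1) * isRoot_cyclotomic_five_iff.mp hw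
  rw [← Complex.inv_eq_conj (Complex.norm_eq_one_of_pow_eq_one hw5 (by norm_num))]
  exact inv_eq_of_mul_eq_one_right (by linear_combination hw5)

/-- The change of basis from `e₁, γ e₁` to the standard basis of `ℂ²`, rescaled so as to have
entries in `ℤ[w]`. -/
def basisChange (hw : (cyclotomic 5 ℂ).IsRoot w) : GL (Fin 2) ℂ :=
  GeneralLinearGroup.mkOfDetNeZero !![w ^ 2 - w ^ 3, w + w ^ 4; 0, 1] <| by
    have hw5 : w ^ 5 = 1 := by linear_combination (w - 1) * isRoot_cyclotomic_five_iff.mp hw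
    have hw0 : w ≠ 0 := by rintro rfl; simp at hw5
    rw [det_fin_two_of, mul_one, mul_zero, sub_zero, show w ^ 2 - w ^ 3 = w ^ 2 * (1 - w) by ring]
    exact mul_ne_zero (pow_ne_zero 2 hw0)
      (sub_ne_zero.mpr (ne_one_of_isRoot_cyclotomic_five hw).symm)

@[simp] lemma coe_basisChange (hw : (cyclotomic 5 ℂ).IsRoot w) :
    (basisChange hw : Matrix (Fin 2) (Fin 2) ℂ) = !![w ^ 2 - w ^ 3, w + w ^ 4; 0, 1] := rfl

lemma basisChange_mul_conjIntertwiner (hw : (cyclotomic 5 ℂ).IsRoot w) :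
    (basisChange hw : Matrix (Fin 2) (Fin 2) ℂ) * conjIntertwiner w =
      -(!![0, 1; -1, 0] * (basisChange hw : Matrix (Fin 2) (Fin 2) ℂ).map conj) := by
  have := isRoot_cyclotomic_five_iff.mp hw
  have hconj : (basisChange hw : Matrix (Fin 2) (Fin 2) ℂ).map conj =
      !![w ^ 3 - w ^ 2, w + w ^ 4; 0, 1] := by
    ext i j
    fin_cases i <;> fin_cases j <;> simp [conj_eq_pow_four hw] <;> grind
  rw [hconj]
  ext i j
  fin_cases i <;> fin_cases j <;>
    simp [conjIntertwiner, mul_apply, Fin.sum_univ_two] <;> grind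

lemma isQuaternionic_basisChange_mul {hw : (cyclotomic 5 ℂ).IsRoot w} {g : SL(2, ℂ)}
    (hg : g ∈ integralGroup hw) :
    IsQuaternionic ((basisChange hw).val * g.val * (basisChange hw)⁻¹.val) := by
  let P := basisChange hw
  let σP : GL (Fin 2) ℂ := Units.map (RingHom.mapMatrix conj).toMonoidHom P
  have hS : SemiconjBy (conjIntertwiner w) (g.val.map conj) g.val :=
    semiconjBy_conjIntertwiner (conj_eq_pow_four hw) hg
  have hP : SemiconjBy P.val g.val (P.val * g.val * P⁻¹.val) := by
    simp [SemiconjBy, mul_assoc]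
  have hσP : SemiconjBy σP⁻¹.val ((P.val * g.val * P⁻¹.val).map conj) (g.val.map conj) :=
    (hP.map (RingHom.mapMatrix conj)).units_inv_symm_left (a := σP)
  have hJ : P.val * conjIntertwiner w * σP⁻¹.val = -!![0, 1; -1, 0] := by
    rw [basisChange_mul_conjIntertwiner, neg_mul, mul_assoc]
    exact congr(-(_ * $(σP.mul_inv))).trans (by rw [mul_one])
  refine isQuaternionic_of_semiconjBy (SemiconjBy.neg_left_iff.mp ?_)
  rw [← hJ]
  exact (hP.mul_left hS).mul_left hσP

lemma basisChange_mul_sub_one (hw : (cyclotomic 5 ℂ).IsRoot w) (A : Matrix (Fin 2) (Fin 2) ℂ) :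
    (basisChange hw).val * (A - 1) * (basisChange hw)⁻¹.val =
      (basisChange hw).val * A * (basisChange hw)⁻¹.val - 1 := by
  rw [mul_sub, sub_mul, mul_one, Units.mul_inv]

lemma norm_det_sub_one_le_four {hw : (cyclotomic 5 ℂ).IsRoot w} {g : SL(2, ℂ)}
    (hg : g ∈ integralGroup hw) : ‖(g.val - 1).det‖ ≤ 4 := by
  rw [← det_units_conj (basisChange hw), basisChange_mul_sub_one]
  exact (isQuaternionic_basisChange_mul hg).norm_det_sub_one_le
    ((det_units_conj _ _).trans g.det_coe)

lemma eq_one_of_det_sub_one_eq_zero {hw : (cyclotomic 5 ℂ).IsRoot w} {g : SL(2, ℂ)}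
    (hg : g ∈ integralGroup hw) (hdet : (g.val - 1).det = 0) : g = 1 := by
  rw [← det_units_conj (basisChange hw), basisChange_mul_sub_one] at hdet
  have h := (isQuaternionic_basisChange_mul hg).sub_one.eq_zero_of_det_eq_zero hdet
  rw [← basisChange_mul_sub_one, Units.mul_left_eq_zero, Units.mul_right_eq_zero,
    sub_eq_zero] at h
  exact Subtype.ext h

end Quaternionic

section Reduction

open NumberField Polynomial
open scoped MatrixGroups

variable {K : Type*} [Field K] [NumberField K] {z : 𝓞 K}

lemma complexConj_eq_pow_four [IsCMField K] (hz : (cyclotomic 5 (𝓞 K)).IsRoot z) :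
    IsCMField.ringOfIntegersComplexConj K z = z ^ 4 := by
  obtain ⟨φ⟩ : Nonempty (K →+* ℂ) := inferInstance
  refine RingOfIntegers.ext (φ.injective ?_)
  rw [IsCMField.coe_ringOfIntegersComplexConj, IsCMField.complexEmbedding_complexConj]
  exact (conj_eq_pow_four (isRoot_cyclotomic_map (φ.comp (algebraMap (𝓞 K) K)) hz)).trans
    (by simp)

lemma exists_ker_eq_span_sub_one [IsCyclotomicExtension {5} ℚ K] {ζ : K}
    (hζ : IsPrimitiveRoot ζ 5) :
    ∃ π : 𝓞 K →+* ZMod 5, RingHom.ker π = Ideal.span {hζ.toInteger - 1} := by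
  have : Fact (Nat.Prime 5) := ⟨by norm_num⟩
  refine exists_ringHom_zmod_ker_eq ?_
  rw [hζ.card_quotient_toInteger_sub_one, hζ.norm_toInteger_sub_one_of_prime_ne_two' (by norm_num)]
  rfl

variable [IsCyclotomicExtension {5} ℚ K] {ζ : K}

lemma det_sub_one_eq_zero_of_map_eq_one (hζ : IsPrimitiveRoot ζ 5)
    {hz : (cyclotomic 5 (𝓞 K)).IsRoot hζ.toInteger} {π : 𝓞 K →+* ZMod 5}
    (hπ : RingHom.ker π = Ideal.span {hζ.toInteger - 1}) {g : SL(2, 𝓞 K)}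
    (hg : g ∈ integralGroup hz) (hg1 : SpecialLinearGroup.map π g = 1) :
    (g.val - 1).det = 0 := by
  have : Fact (Nat.Prime 5) := ⟨by norm_num⟩
  have := IsCyclotomicExtension.Rat.isCMField K (S := {5}) ⟨5, by simp, by norm_num⟩
  refine eq_zero_of_dvd_of_norm_le (B := 4) (sub_one_pow_four_dvd_det
    (ne_one_of_isRoot_cyclotomic_five hz)
    (σ := (IsCMField.ringOfIntegersComplexConj K).toRingEquiv) (complexConj_eq_pow_four hz)
    hπ hg hg1) (fun φ ↦ ?_) ?_
  · let ψ : 𝓞 K →+* ℂ := φ.comp (algebraMap (𝓞 K) K)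
    have hdet : ψ (g.val - 1).det = ((SpecialLinearGroup.map ψ g).val - 1).det := by
      rw [RingHom.map_det, map_sub, map_one, SpecialLinearGroup.map_apply_coe]
    exact congr(‖$hdet‖).trans_le (norm_det_sub_one_le_four (map_mem_integralGroup ψ hg))
  · rw [IsCyclotomicExtension.finrank K (cyclotomic.irreducible_rat (n := 5) (by norm_num)),
      map_pow, hζ.norm_toInteger_sub_one_of_prime_ne_two' (by norm_num),
      Nat.totient_prime (by norm_num)]
    norm_num

lemma eq_one_of_map_eq_one (hζ : IsPrimitiveRoot ζ 5)
    {hz : (cyclotomic 5 (𝓞 K)).IsRoot hζ.toInteger} {π : 𝓞 K →+* ZMod 5}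
    (hπ : RingHom.ker π = Ideal.span {hζ.toInteger - 1}) {g : SL(2, 𝓞 K)}
    (hg : g ∈ integralGroup hz) (hg1 : SpecialLinearGroup.map π g = 1) : g = 1 := by
  obtain ⟨φ⟩ : Nonempty (K →+* ℂ) := inferInstance
  let ψ : 𝓞 K →+* ℂ := φ.comp (algebraMap (𝓞 K) K)
  have hψ : Function.Injective ψ := φ.injective.comp RingOfIntegers.coe_injective
  have hdet := congr(ψ $(det_sub_one_eq_zero_of_map_eq_one hζ hπ hg hg1))
  rw [RingHom.map_det, map_sub, map_one, map_zero] at hdet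
  have hψg : SpecialLinearGroup.map ψ g = 1 :=
    eq_one_of_det_sub_one_eq_zero (map_mem_integralGroup ψ hg) hdet
  exact specialLinearGroup_map_injective hψ (hψg.trans (map_one _).symm)

lemma nonempty_integralGroup_mulEquiv (hζ : IsPrimitiveRoot ζ 5)
    (hz : (cyclotomic 5 (𝓞 K)).IsRoot hζ.toInteger) :
    Nonempty (integralGroup hz ≃* SL(2, ZMod 5)) := by
  obtain ⟨π, hπ⟩ := exists_ker_eq_span_sub_one hζ
  have hπz : π hζ.toInteger = 1 := by
    rw [← sub_eq_zero, ← map_one π, ← map_sub, ← RingHom.mem_ker, hπ]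
    exact Ideal.mem_span_singleton_self _
  refine ⟨MulEquiv.ofBijective ((SpecialLinearGroup.map π).domRestrict (integralGroup hz)) ⟨?_, ?_⟩⟩
  · rw [injective_iff_map_eq_one]
    exact fun g hg1 ↦ Subtype.ext (eq_one_of_map_eq_one hζ hπ g.2 hg1)
  · rw [← MonoidHom.range_eq_top, MonoidHom.domRestrict_range, map_integralGroup]
    simp_rw [hπz]
    exact integralGroup_one_eq_top

lemma exists_ringHom_complex_toInteger_eq (hζ : IsPrimitiveRoot ζ 5) {w : ℂ}
    (hw : IsPrimitiveRoot w 5) :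
    ∃ ψ : 𝓞 K →+* ℂ, Function.Injective ψ ∧ ψ hζ.toInteger = w := by
  let e := hζ.embeddingsEquivPrimitiveRoots ℂ (cyclotomic.irreducible_rat (n := 5) (by norm_num))
  let w' : primitiveRoots 5 ℂ := ⟨w, (mem_primitiveRoots (by norm_num)).mpr hw⟩
  exact ⟨(e.symm w').toRingHom.comp (algebraMap (𝓞 K) K),
    (e.symm w').toRingHom.injective.comp RingOfIntegers.coe_injective,
    congr_arg Subtype.val (e.apply_symm_apply w')⟩

lemma nonempty_integralGroup_complex_mulEquiv {w : ℂ} (hw : (cyclotomic 5 ℂ).IsRoot w) :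
    Nonempty (integralGroup hw ≃* SL(2, ZMod 5)) := by
  have : IsCyclotomicExtension {5} ℚ (CyclotomicField 5 ℚ) :=
    CyclotomicField.isCyclotomicExtension 5 ℚ
  have hζ := IsCyclotomicExtension.zeta_spec 5 ℚ (CyclotomicField 5 ℚ)
  obtain ⟨ψ, hψ, rfl⟩ := exists_ringHom_complex_toInteger_eq hζ (isRoot_cyclotomic_iff.mp hw)
  have hz : (cyclotomic 5 (𝓞 (CyclotomicField 5 ℚ))).IsRoot hζ.toInteger :=
    hζ.toInteger_isPrimitiveRoot.isRoot_cyclotomic (by norm_num)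
  obtain ⟨f⟩ := nonempty_integralGroup_mulEquiv hζ hz
  rw [← map_integralGroup ψ hz]
  exact ⟨((integralGroup hz).equivMapOfInjective _ (specialLinearGroup_map_injective hψ)).symm.trans
    f⟩

end Reduction

section BinaryIcosahedral

open Polynomial
open scoped MatrixGroups

/-- The binary icosahedral group `⟨alpha, beta, gamma⟩`, so that `S21` consists of the matrices
`diag(g, 1)` with `g` in this group. -/
def binaryIcosahedral : Subgroup (GL (Fin 2) ℂ) :=
  Subgroup.closure {g | (g : Matrix (Fin 2) (Fin 2) ℂ) ∈ ({alpha, beta, gamma} : Set _)}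

lemma isRoot_cyclotomic_zeta5 : (cyclotomic 5 ℂ).IsRoot zeta5 := by
  rw [isRoot_cyclotomic_iff, zeta5]
  exact_mod_cast Complex.isPrimitiveRoot_exp 5 (by norm_num)

lemma basisChange_mul_integralAlpha :
    (basisChange isRoot_cyclotomic_zeta5).val * integralAlpha isRoot_cyclotomic_zeta5 =
      alpha * (basisChange isRoot_cyclotomic_zeta5).val := by
  have := isRoot_cyclotomic_five_iff.mp isRoot_cyclotomic_zeta5
  ext i j
  fin_cases i <;> fin_cases j <;> simp [alpha, mul_apply, Fin.sum_univ_two] <;> grind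

lemma basisChange_mul_integralBeta :
    (basisChange isRoot_cyclotomic_zeta5).val * integralBeta isRoot_cyclotomic_zeta5 =
      beta * (basisChange isRoot_cyclotomic_zeta5).val := by
  have := isRoot_cyclotomic_five_iff.mp isRoot_cyclotomic_zeta5
  ext i j
  fin_cases i <;> fin_cases j <;> simp [beta, mul_apply, Fin.sum_univ_two] <;> grind

lemma basisChange_mul_integralGamma :
    (basisChange isRoot_cyclotomic_zeta5).val * integralGamma ℂ =
      gamma * (basisChange isRoot_cyclotomic_zeta5).val := by
  have hw := isRoot_cyclotomic_five_iff.mp isRoot_cyclotomic_zeta5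
  have hdet : zeta5 ^ 2 - zeta5 ^ 3 ≠ 0 := by
    simpa using (basisChange isRoot_cyclotomic_zeta5).det_ne_zero
  have hinv : zeta5⁻¹ = zeta5 ^ 4 :=
    inv_eq_of_mul_eq_one_right (by linear_combination (zeta5 - 1) * hw)
  ext i j
  fin_cases i <;> fin_cases j <;>
    simp [gamma, hinv, mul_apply, Fin.sum_univ_two] <;> field_simp <;> grind

lemma map_conj_integralGroup_zeta5 :
    (integralGroup isRoot_cyclotomic_zeta5).map ((MulAut.conj
      (basisChange isRoot_cyclotomic_zeta5)).toMonoidHom.comp SpecialLinearGroup.toGL) =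
      binaryIcosahedral := by
  let f : SL(2, ℂ) →* GL (Fin 2) ℂ := (MulAut.conj
    (basisChange isRoot_cyclotomic_zeta5)).toMonoidHom.comp SpecialLinearGroup.toGL
  have hf {g : SL(2, ℂ)} {A : Matrix (Fin 2) (Fin 2) ℂ}
      (h : (basisChange isRoot_cyclotomic_zeta5).val * g =
        A * (basisChange isRoot_cyclotomic_zeta5).val) : (f g).val = A := by
    exact (congr($h * (basisChange isRoot_cyclotomic_zeta5)⁻¹.val)).trans
      (Units.mul_inv_cancel_right A _)
  change (integralGroup isRoot_cyclotomic_zeta5).map f = _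
  rw [integralGroup, MonoidHom.map_closure, Set.image_insert_eq, Set.image_pair, binaryIcosahedral,
    ← hf basisChange_mul_integralAlpha, ← hf basisChange_mul_integralBeta,
    ← hf basisChange_mul_integralGamma]
  simp only [Set.mem_insert_iff, Set.mem_singleton_iff, Units.val_inj]
  rfl

theorem nonempty_binaryIcosahedral_mulEquiv : Nonempty (binaryIcosahedral ≃* SL25) := by
  obtain ⟨f⟩ := nonempty_integralGroup_complex_mulEquiv isRoot_cyclotomic_zeta5
  rw [← map_conj_integralGroup_zeta5]
  refine ⟨(Subgroup.equivMapOfInjective _ _ ?_).symm.trans f⟩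
  exact (MulAut.conj _).injective.comp SpecialLinearGroup.toGL_injective

end BinaryIcosahedral

section SplitExtension

variable {G H A C : Type*} [Group G] [Group H] [Group A] [Group C]

lemma exists_mulEquiv_semidirectProduct {f : G →* H} {s : H →* G}
    (hs : f.comp s = MonoidHom.id H) (e : f.ker ≃* A) (c : H ≃* C) :
    ∃ φ : C →* MulAut A, Nonempty (G ≃* A ⋊[φ] C) := by
  have hfs (x : H) : f (s x) = x := congr($hs x)
  let S : GroupExtension A G C :=
    { inl := f.ker.subtype.comp e.symm.toMonoidHom
      rightHom := c.toMonoidHom.comp f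
      inl_injective := f.ker.subtype_injective.comp e.symm.injective
      range_inl_eq_ker_rightHom := by
        rw [MonoidHom.range_comp, MulEquiv.toMonoidHom_eq_coe,
          MonoidHom.range_eq_top.mpr e.symm.surjective, ← MonoidHom.range_eq_map,
          Subgroup.range_subtype, MulEquiv.toMonoidHom_eq_coe, MonoidHom.ker_mulEquiv_comp]
      rightHom_surjective := c.surjective.comp fun x ↦ ⟨s x, hfs x⟩ }
  let σ : S.Splitting :=
    { s.comp c.symm.toMonoidHom with
      rightInverse_rightHom := fun x ↦ by simp [S, hfs] }
  exact ⟨σ.conjAct, ⟨σ.semidirectProductMulEquiv.symm⟩⟩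

lemma exists_monoidHom_intUnits_apply_neg_one {M : Type*} [Monoid M] {q : M} (hq : q * q = 1) :
    ∃ s : ℤˣ →* M, s (-1) = q := by
  let s : ℤˣ →* M :=
    { toFun := fun u ↦ if u = 1 then 1 else q
      map_one' := if_pos rfl
      map_mul' := fun u v ↦ by
        obtain rfl | rfl := Int.units_eq_one_or u <;>
          obtain rfl | rfl := Int.units_eq_one_or v <;> simp [hq] }
  have hs : s (-1) = if (-1 : ℤˣ) = 1 then 1 else q := rfl
  exact ⟨s, hs.trans (if_neg (by decide))⟩

lemma exists_monoidHom_intUnits_coe_eq {R : Type*} [Ring R] [NoZeroDivisors R] [CharZero R]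
    {f : G →* Rˣ} (hf : ∀ g, f g ^ 2 = 1) : ∃ δ : G →* ℤˣ, ∀ g, ((δ g : ℤ) : R) = f g := by
  let ι : ℤˣ →* Rˣ := Units.map (Int.castRingHom R)
  have hι : Function.Injective ι := Units.map_injective Int.cast_injective
  have hfι (g : G) : f g ∈ ι.range := by
    obtain h | h : (f g : R) = 1 ∨ (f g : R) = -1 :=
      sq_eq_one_iff.mp (congr(($(hf g) : R)))
    · exact ⟨1, Units.ext (by simpa [ι] using h.symm)⟩
    · exact ⟨-1, Units.ext (by simpa [ι] using h.symm)⟩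
  refine ⟨(MonoidHom.ofInjective hι).symm.toMonoidHom.comp (f.codRestrict _ hfι), fun g ↦ ?_⟩
  exact congr(($(MonoidHom.apply_ofInjective_symm hι ⟨f g, hfι g⟩) : R))

end SplitExtension

section BlockDiagonal

/-- The block-diagonal embedding `(A, a) ↦ diag(A, a)`. -/
def blockDiagHom : GL (Fin 2) ℂ × ℂˣ →* GL (Fin 3) ℂ :=
  (Units.map
    { toFun := fun x : Matrix (Fin 2) (Fin 2) ℂ × ℂ ↦
        !![x.1 0 0, x.1 0 1, 0; x.1 1 0, x.1 1 1, 0; 0, 0, x.2]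
      map_one' := by ext i j; fin_cases i <;> fin_cases j <;> rfl
      map_mul' := fun x y ↦ by
        ext i j
        fin_cases i <;> fin_cases j <;> simp [mul_apply, Fin.sum_univ_succ] }).comp
    MulEquiv.prodUnits.symm.toMonoidHom

lemma coe_blockDiagHom (x : GL (Fin 2) ℂ × ℂˣ) :
    (blockDiagHom x : Matrix (Fin 3) (Fin 3) ℂ) =
      !![x.1.val 0 0, x.1.val 0 1, 0; x.1.val 1 0, x.1.val 1 1, 0; 0, 0, x.2.val] := rfl

lemma blockDiagHom_injective : Function.Injective blockDiagHom := by
  intro x y hxy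
  have h (i j : Fin 3) := congr(($hxy : Matrix (Fin 3) (Fin 3) ℂ) i j)
  simp only [coe_blockDiagHom] at h
  refine Prod.ext (Units.ext ?_) (Units.ext (h 2 2))
  ext i j
  fin_cases i <;> fin_cases j
  exacts [h 0 0, h 0 1, h 1 0, h 1 1]

lemma det_emb (A : Matrix (Fin 2) (Fin 2) ℂ) : (emb A).det = A.det := by
  simp [emb, det_fin_three, det_fin_two]

lemma gen3_image_emb (s : Set (Matrix (Fin 2) (Fin 2) ℂ)) :
    gen3 (emb '' s) = ((Subgroup.closure {g : GL (Fin 2) ℂ | g.val ∈ s}).map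
      (MonoidHom.inl (GL (Fin 2) ℂ) ℂˣ)).map blockDiagHom := by
  rw [gen3, MonoidHom.map_closure, MonoidHom.map_closure]
  congr 1
  ext g
  rw [Set.image_image]
  constructor
  · rintro ⟨A, hA, hAg⟩
    have hdet : A.det ≠ 0 := by rw [← det_emb, hAg]; exact g.det_ne_zero
    exact ⟨GeneralLinearGroup.mkOfDetNeZero A hdet, hA, Units.ext hAg⟩
  · rintro ⟨g, hg, rfl⟩
    exact ⟨g, hg, rfl⟩

lemma S21_eq_map_blockDiagHom :
    S21 = (binaryIcosahedral.map (MonoidHom.inl _ ℂˣ)).map blockDiagHom := by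
  rw [binaryIcosahedral, ← gen3_image_emb, Set.image_insert_eq, Set.image_pair]
  rfl

lemma gen3_diagonal_I_eq_map_blockDiagHom :
    gen3 {diagonal ![1, 1, Complex.I]} =
      ((rootsOfUnity 4 ℂ).map (MonoidHom.inr (GL (Fin 2) ℂ) _)).map blockDiagHom := by
  have hI : IsPrimitiveRoot (Units.mk0 Complex.I Complex.I_ne_zero) 4 :=
    IsPrimitiveRoot.coe_units_iff.mp Complex.isPrimitiveRoot_I
  rw [← hI.zpowers_eq, Subgroup.zpowers_eq_closure, MonoidHom.map_closure, MonoidHom.map_closure,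
    Set.image_singleton, Set.image_singleton, gen3]
  congr 1
  ext g
  rw [Set.mem_ofPred_eq, Set.mem_singleton_iff, Set.mem_singleton_iff, ← Units.val_inj]
  convert Iff.rfl using 2
  ext i j
  fin_cases i <;> fin_cases j <;> simp [coe_blockDiagHom]

theorem T_eq_map_blockDiagHom :
    T = (binaryIcosahedral.prod (rootsOfUnity 4 ℂ)).map blockDiagHom := by
  have hprod : binaryIcosahedral.prod (rootsOfUnity 4 ℂ) =
      binaryIcosahedral.map (MonoidHom.inl _ _) ⊔ (rootsOfUnity 4 ℂ).map (MonoidHom.inr _ _) := by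
    refine le_antisymm (Subgroup.prod_le_iff.mpr ⟨le_sup_left, le_sup_right⟩) ?_
    exact sup_le_iff.mpr (Subgroup.prod_le_iff.mp le_rfl)
  rw [T, S21_eq_map_blockDiagHom, gen3_diagonal_I_eq_map_blockDiagHom, hprod, Subgroup.map_sup]

end BlockDiagonal

section Quotient

/-- The group `T` as the direct product of `⟨alpha, beta, gamma⟩` and `⟨I⟩`, through
`(g, a) ↦ diag(g, a)`. -/
def blockDiagEquiv : binaryIcosahedral × rootsOfUnity 4 ℂ ≃* T :=
  (Subgroup.prodEquiv _ _).symm.trans <|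
    (Subgroup.equivMapOfInjective _ _ blockDiagHom_injective).trans <|
      MulEquiv.subgroupCongr T_eq_map_blockDiagHom.symm

@[simp] lemma coe_blockDiagEquiv (x : binaryIcosahedral × rootsOfUnity 4 ℂ) :
    (blockDiagEquiv x : GL (Fin 3) ℂ) = blockDiagHom (x.1, x.2) := rfl

lemma coe_eq_one_or_neg_one_of_mem_N {t : T} (ht : t ∈ N) :
    t.val.val = 1 ∨ t.val.val = -1 := by
  induction ht using Subgroup.closure_induction with
  | mem t ht => exact .inr ht
  | one => exact .inl rfl
  | mul t u _ _ ht hu =>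
    rw [Subgroup.coe_mul, Units.val_mul]
    obtain ht | ht := ht <;> obtain hu | hu := hu <;> simp [ht, hu]
  | inv t _ ht =>
    rw [Subgroup.coe_inv, coe_units_inv]
    exact ht.imp (fun ht ↦ inv_eq_left_inv (by simp [ht])) fun ht ↦ inv_eq_left_inv (by simp [ht])

lemma exists_monoidHom_mk_eq_sq :
    ∃ δ : Q →* ℤˣ, ∀ t : T, ((δ (QuotientGroup.mk t) : ℤ) : ℂ) = t.val.val 2 2 ^ 2 := by
  let f : T →* ℂˣ := (powMonoidHom 2).comp <| (rootsOfUnity 4 ℂ).subtype.comp <|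
    (MonoidHom.snd _ _).comp blockDiagEquiv.symm.toMonoidHom
  have hf (t : T) : (f t : ℂ) = t.val.val 2 2 ^ 2 := by
    obtain ⟨x, rfl⟩ := blockDiagEquiv.surjective t
    simp [f, coe_blockDiagHom]
  have hf2 (t : T) : f t ^ 2 = 1 :=
    (pow_mul _ 2 2).symm.trans (blockDiagEquiv.symm t).2.2
  obtain ⟨δ, hδ⟩ := exists_monoidHom_intUnits_coe_eq (R := ℂ) hf2
  refine ⟨QuotientGroup.lift N δ ?_, fun t ↦ (hδ t).trans (hf t)⟩
  rw [N, Subgroup.closure_le]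
  intro t ht
  have hδt : ((δ t : ℤ) : ℂ) = 1 := by
    rw [hδ, hf, show t.val.val = -1 from ht]; simp
  exact Units.ext (Int.cast_injective (α := ℂ) (by simpa using hδt))

/-- The homomorphism `g ↦ ±diag(g, 1)`. -/
def binaryIcosahedralToQ : binaryIcosahedral →* Q :=
  (QuotientGroup.mk' N).comp (blockDiagEquiv.toMonoidHom.comp (MonoidHom.inl _ _))

lemma binaryIcosahedralToQ_apply (g : binaryIcosahedral) :
    binaryIcosahedralToQ g = QuotientGroup.mk (blockDiagEquiv (g, 1)) := rfl

lemma binaryIcosahedralToQ_injective : Function.Injective binaryIcosahedralToQ := by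
  rw [injective_iff_map_eq_one]
  intro g hg
  rw [binaryIcosahedralToQ_apply, QuotientGroup.eq_one_iff] at hg
  obtain h | h := coe_eq_one_or_neg_one_of_mem_N hg
  · have hg1 : blockDiagEquiv (g, 1) = 1 := Subtype.ext (Units.ext h)
    exact congr(Prod.fst $(blockDiagEquiv.map_eq_one_iff.mp hg1))
  · have h22 : (1 : ℂ) = -1 := congr($h 2 2)
    norm_num at h22

lemma exists_coe_eq_beta : ∃ b : binaryIcosahedral, b.val.val = beta := by
  let b : GL (Fin 2) ℂ := GeneralLinearGroup.mkOfDetNeZero beta (by simp [beta])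
  exact ⟨⟨b, Subgroup.subset_closure (by simp [b])⟩, rfl⟩

lemma neg_one_mem_binaryIcosahedral : -1 ∈ binaryIcosahedral := by
  obtain ⟨b, hb⟩ := exists_coe_eq_beta
  convert (b * b).2
  ext i j
  fin_cases i <;> fin_cases j <;> simp [hb, beta]

lemma blockDiagEquiv_mem_N {x : binaryIcosahedral × rootsOfUnity 4 ℂ}
    (h₁ : x.1.val.val = -1) (h₂ : x.2.val.val = -1) : blockDiagEquiv x ∈ N := by
  refine Subgroup.subset_closure ?_
  rw [Set.mem_ofPred_eq, coe_blockDiagEquiv, coe_blockDiagHom, h₁, h₂]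
  ext i j
  fin_cases i <;> fin_cases j <;> simp

variable {δ : Q →* ℤˣ}

lemma ker_eq_range_binaryIcosahedralToQ
    (hδ : ∀ t : T, ((δ (QuotientGroup.mk t) : ℤ) : ℂ) = t.val.val 2 2 ^ 2) :
    δ.ker = binaryIcosahedralToQ.range := by
  have hδx (x : binaryIcosahedral × rootsOfUnity 4 ℂ) :
      QuotientGroup.mk (blockDiagEquiv x) ∈ δ.ker ↔ (x.2.val.val = 1 ∨ x.2.val.val = -1) := by
    rw [← sq_eq_one_iff, MonoidHom.mem_ker, ← Units.val_inj, ← Int.cast_inj (α := ℂ), hδ]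
    simp [coe_blockDiagHom]
  refine le_antisymm (fun q hq ↦ ?_) ?_
  · obtain ⟨t, rfl⟩ := QuotientGroup.mk_surjective q
    obtain ⟨⟨g, a⟩, rfl⟩ := blockDiagEquiv.surjective t
    obtain ha | ha := (hδx _).mp hq
    · obtain rfl : a = 1 := Subtype.ext (Units.ext ha)
      exact ⟨g, rfl⟩
    · let n : binaryIcosahedral := ⟨-1, neg_one_mem_binaryIcosahedral⟩
      have hn : n * n = 1 := Subtype.ext (by simp [n])
      refine ⟨g * n, ?_⟩
      rw [binaryIcosahedralToQ_apply,
        ← QuotientGroup.mk_mul_of_mem _ (blockDiagEquiv_mem_N (x := (n, a)) rfl ha), ← map_mul,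
        Prod.mk_mul_mk, mul_assoc, hn, mul_one, one_mul]
  · rintro _ ⟨g, rfl⟩
    exact (hδx _).mpr (.inl rfl)

theorem nonempty_ker_mulEquiv
    (hδ : ∀ t : T, ((δ (QuotientGroup.mk t) : ℤ) : ℂ) = t.val.val 2 2 ^ 2) :
    Nonempty (δ.ker ≃* SL25) := by
  obtain ⟨e⟩ := nonempty_binaryIcosahedral_mulEquiv
  rw [ker_eq_range_binaryIcosahedralToQ hδ]
  exact ⟨(MonoidHom.ofInjective binaryIcosahedralToQ_injective).symm.trans e⟩

lemma exists_coe_eq_beta_I : ∃ m : T, m.val.val = !![0, 1, 0; -1, 0, 0; 0, 0, Complex.I] := by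
  obtain ⟨b, hb⟩ := exists_coe_eq_beta
  let i : rootsOfUnity 4 ℂ := ⟨Units.mk0 Complex.I Complex.I_ne_zero, Units.ext Complex.I_pow_four⟩
  refine ⟨blockDiagEquiv (b, i), ?_⟩
  rw [coe_blockDiagEquiv, coe_blockDiagHom, hb]
  rfl

theorem exists_section_apply_neg_one
    (hδ : ∀ t : T, ((δ (QuotientGroup.mk t) : ℤ) : ℂ) = t.val.val 2 2 ^ 2) :
    ∃ s : ℤˣ →* Q, δ.comp s = MonoidHom.id ℤˣ ∧
      ∃ m : T, m.val.val = !![0, 1, 0; -1, 0, 0; 0, 0, Complex.I] ∧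
        s (-1) = QuotientGroup.mk m := by
  obtain ⟨m, hm⟩ := exists_coe_eq_beta_I
  have hm_sq : (m : Q) * m = 1 := by
    refine (QuotientGroup.eq_one_iff _).mpr (Subgroup.subset_closure ?_)
    rw [Set.mem_ofPred_eq, Subgroup.coe_mul, Units.val_mul, hm]
    ext i j
    fin_cases i <;> fin_cases j <;> simp
  have hδm : δ m = -1 := by
    have h : ((δ m : ℤ) : ℂ) = -1 := by rw [hδ, hm]; exact Complex.I_sq
    exact Units.ext (Int.cast_injective (α := ℂ) (by simpa using h))
  obtain ⟨s, hs⟩ := exists_monoidHom_intUnits_apply_neg_one hm_sq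
  refine ⟨s, MonoidHom.ext fun u ↦ ?_, m, hm, hs⟩
  obtain rfl | rfl := Int.units_eq_one_or u
  · rw [map_one, map_one]
  · rw [MonoidHom.comp_apply, hs, hδm, MonoidHom.id_apply]

end Quotient

theorem stmt15 :
    ∃ δ : Q →* ℤˣ,
      (∀ t : T, ((δ (QuotientGroup.mk t) : ℤ) : ℂ)
          = (((t : GL (Fin 3) ℂ) : Matrix (Fin 3) (Fin 3) ℂ) 2 2) ^ 2) ∧
      Function.Surjective δ ∧
      Nonempty (δ.ker ≃* SL25) ∧
      (∃ s : ℤˣ →* Q, δ.comp s = MonoidHom.id ℤˣ ∧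
        ∃ m : T, ((m : GL (Fin 3) ℂ) : Matrix (Fin 3) (Fin 3) ℂ)
            = Matrix.of ![![0, 1, 0], ![-1, 0, 0], ![0, 0, Complex.I]] ∧
          s (-1) = QuotientGroup.mk m) ∧
      ∃ φ : Multiplicative (ZMod 2) →* MulAut SL25,
        Nonempty (Q ≃* SL25 ⋊[φ] Multiplicative (ZMod 2)) := by
  obtain ⟨δ, hδ⟩ := exists_monoidHom_mk_eq_sq
  obtain ⟨s, hs, hs_neg_one⟩ := exists_section_apply_neg_one hδ
  obtain ⟨e⟩ := nonempty_ker_mulEquiv hδ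
  let c : ℤˣ ≃* Multiplicative (ZMod 2) := mulEquivOfPrimeCardEq (p := 2) (by simp) (by simp)
  exact ⟨δ, hδ, fun u ↦ ⟨s u, congr($hs u)⟩, ⟨e⟩, ⟨s, hs, hs_neg_one⟩,
    exists_mulEquiv_semidirectProduct hs e c⟩
end
end
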